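/- arXiv:2403.08745 — 7 statements merged into one kernel-verified Lean document; each statement's English description precedes it below -/
import Mathlib

section
/- Let 0 ≤ α < 2 and β, μ ∈ ℝ with μ < μ(α+β), where μ(δ) := (1−δ)²/4. Set κ_α := (2−α)/2 and ν := √(μ(α+β) − μ)/κ_α. Let j > 0 and define φ(x) := x^{(1−α−β)/2} J_ν(j x^{κ_α}) for x ∈ (0,1). Then for every x ∈ (0,1), −(x^α φ'(x))' − β x^{α−1} φ'(x) − (μ/x^{2−α}) φ(x) = κ_α² j² φ(x). -/
/-!
On `x > 0` one has `J_ν(x) = (x/2)^ν G_ν(x²/4)` with the entire function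
`G_ν(z) = ∑ (-1)^m z^m / (m! Γ(m+ν+1))` (`besselG`, `besselJ_eq`). Termwise differentiation gives
`G_ν' = -G_{ν+1}` (`hasDerivAt_besselG`), and comparing coefficients gives the three-term relation
`z G_{ν+2} = (ν+1) G_{ν+1} - G_ν` (`besselG_recurrence`); together they are Bessel's equation.

Hence, with `a = 2 - α = 2κ`, `c = j²/4` and `s = (1-α-β)/2 + κν`, the function `φ` is a constant
multiple of `x^s G_ν(c x^a)`. In the operator applied to it, eliminating `G_{ν+2}` leaves
multiples of `G_ν` and `G_{ν+1}` only. The coefficient of `x^{s-a} G_ν` vanishes because `s` is a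
root of the indicial equation `s(s+α-1) + βs + μ = 0`, that of `x^s G_{ν+1}` vanishes because
`2s + 1 + β = a(ν+1)`, and what remains is `a² c = κ² j²` times the function.
-/

open Set

/-- The Bessel function of the first kind `J_ν`, defined by its power series. -/
noncomputable def besselJ (ν : ℝ) (x : ℝ) : ℝ :=
  ∑' m : ℕ, ((-1 : ℝ) ^ m / ((m.factorial : ℝ) * Real.Gamma ((m : ℝ) + ν + 1)))
    * (x / 2) ^ (2 * (m : ℝ) + ν)

open Filter Topology

/-- The `m`-th Taylor coefficient of `besselG ν`. -/
noncomputable def besselCoeff (ν : ℝ) (m : ℕ) : ℝ :=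
  (-1 : ℝ) ^ m / ((m.factorial : ℝ) * Real.Gamma ((m : ℝ) + ν + 1))

/-- The entire function `G_ν` for which `J_ν(x) = (x/2)^ν G_ν(x²/4)`. -/
noncomputable def besselG (ν z : ℝ) : ℝ := ∑' m : ℕ, besselCoeff ν m * z ^ m

lemma besselCoeff_ne_zero {ν : ℝ} (hν : 0 ≤ ν) (m : ℕ) : besselCoeff ν m ≠ 0 := by
  have : 0 < Real.Gamma ((m : ℝ) + ν + 1) := Real.Gamma_pos_of_pos (by positivity)
  unfold besselCoeff
  positivity

lemma besselCoeff_succ {ν : ℝ} (hν : 0 ≤ ν) (m : ℕ) :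
    besselCoeff ν (m + 1) = -besselCoeff ν m / ((m + 1) * (m + ν + 1)) := by
  have h0 : (m : ℝ) + ν + 1 ≠ 0 := by positivity
  have h : Real.Gamma (((m + 1 : ℕ) : ℝ) + ν + 1)
      = (m + ν + 1) * Real.Gamma ((m : ℝ) + ν + 1) := by
    rw [← Real.Gamma_add_one h0]; push_cast; ring_nf
  have h1 : 0 < Real.Gamma ((m : ℝ) + ν + 1) := Real.Gamma_pos_of_pos (by positivity)
  unfold besselCoeff
  rw [h, Nat.factorial_succ]
  push_cast
  field_simp
  ring

lemma besselCoeff_eq_add_one {ν : ℝ} (hν : 0 ≤ ν) (m : ℕ) :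
    besselCoeff ν m = (m + ν + 1) * besselCoeff (ν + 1) m := by
  have h0 : (m : ℝ) + ν + 1 ≠ 0 := by positivity
  have h : Real.Gamma ((m : ℝ) + (ν + 1) + 1)
      = (m + ν + 1) * Real.Gamma ((m : ℝ) + ν + 1) := by
    rw [← Real.Gamma_add_one h0]; ring_nf
  have h1 : 0 < Real.Gamma ((m : ℝ) + ν + 1) := Real.Gamma_pos_of_pos (by positivity)
  unfold besselCoeff
  rw [h]
  field_simp

/-- Coefficientwise form of `G_ν' = -G_{ν+1}`. -/
lemma succ_mul_besselCoeff_succ {ν : ℝ} (hν : 0 ≤ ν) (m : ℕ) :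
    ((m : ℝ) + 1) * besselCoeff ν (m + 1) = -besselCoeff (ν + 1) m := by
  rw [besselCoeff_succ hν, besselCoeff_eq_add_one hν]
  field_simp

lemma summable_besselG {ν : ℝ} (hν : 0 ≤ ν) (z : ℝ) :
    Summable fun m : ℕ => besselCoeff ν m * z ^ m := by
  rcases eq_or_ne z 0 with rfl | hz
  · exact summable_of_ne_finset_zero (s := {0}) fun m hm => by
      simp only [Finset.mem_singleton] at hm
      simp [hm]
  refine summable_of_ratio_test_tendsto_lt_one (l := 0) one_pos
    (Eventually.of_forall fun m => mul_ne_zero (besselCoeff_ne_zero hν m) (pow_ne_zero _ hz)) ?_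
  have hlim : Tendsto (fun m : ℕ => |z| * (1 / ((m : ℝ) + 1))) atTop (𝓝 0) := by
    simpa using tendsto_one_div_add_atTop_nhds_zero_nat.const_mul |z|
  refine squeeze_zero (fun m => by positivity) (fun m => ?_) hlim
  have hb := abs_pos.2 (besselCoeff_ne_zero hν m)
  have hzp := abs_pos.2 hz
  have hp : 0 < (m : ℝ) + ν + 1 := by positivity
  have hm : 0 < (m : ℝ) + 1 := by positivity
  have e : ‖besselCoeff ν (m + 1) * z ^ (m + 1)‖ / ‖besselCoeff ν m * z ^ m‖
      = |z| * (1 / ((m + 1) * (m + ν + 1))) := by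
    rw [besselCoeff_succ hν]
    simp only [Real.norm_eq_abs, abs_mul, abs_div, abs_neg, abs_pow, abs_of_pos hp, abs_of_pos hm]
    field_simp
    ring
  rw [e]
  gcongr
  nlinarith [(Nat.cast_nonneg m : (0 : ℝ) ≤ m)]

lemma hasDerivAt_besselG {ν : ℝ} (hν : 0 ≤ ν) (z : ℝ) :
    HasDerivAt (besselG ν) (-besselG (ν + 1) z) z := by
  have hν1 : 0 ≤ ν + 1 := by positivity
  set R : ℝ := |z| + 1
  have hR : 0 < R := by positivity
  have hu : Summable fun m : ℕ => |besselCoeff ν m| * (m * R ^ (m - 1)) := by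
    rw [← summable_nat_add_iff 1]
    refine (summable_besselG hν1 R).abs.congr fun m => ?_
    rw [abs_mul, ← abs_neg (besselCoeff (ν + 1) m), ← succ_mul_besselCoeff_succ hν m, abs_mul,
      abs_of_pos (show (0 : ℝ) < (m : ℝ) + 1 by positivity), abs_of_pos (pow_pos hR m)]
    push_cast
    ring
  have key := hasDerivAt_tsum_of_isPreconnected (y := z) (y₀ := z)
    (g := fun (m : ℕ) y => besselCoeff ν m * y ^ m)
    (g' := fun (m : ℕ) y => besselCoeff ν m * (m * y ^ (m - 1)))
    hu Metric.isOpen_ball (convex_ball (0 : ℝ) R).isPreconnected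
    (fun m y _ => (hasDerivAt_pow m y).const_mul _)
    (fun m y hy => by
      have hy : |y| < R := by simpa using hy
      rw [Real.norm_eq_abs, abs_mul, abs_mul, abs_pow, Nat.abs_cast]
      gcongr)
    (by simp [R]) (summable_besselG hν z) (by simp [R])
  have hs : Summable fun m : ℕ => besselCoeff ν m * (m * z ^ (m - 1)) := by
    refine .of_norm_bounded hu fun m => ?_
    rw [Real.norm_eq_abs, abs_mul, abs_mul, abs_pow, Nat.abs_cast]
    gcongr
    simp [R]
  refine key.congr_deriv ?_
  rw [hs.tsum_eq_zero_add, besselG, ← tsum_neg]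
  simp only [Nat.cast_zero, zero_mul, mul_zero, zero_add]
  refine tsum_congr fun m => ?_
  rw [← neg_mul, ← succ_mul_besselCoeff_succ hν m]
  push_cast
  ring

lemma besselG_recurrence {ν : ℝ} (hν : 0 ≤ ν) (z : ℝ) :
    z * besselG (ν + 1 + 1) z = (ν + 1) * besselG (ν + 1) z - besselG ν z := by
  have hν1 : 0 ≤ ν + 1 := by positivity
  have hs1 := (summable_besselG hν1 z).mul_left (ν + 1)
  have hs0 := summable_besselG hν z
  unfold besselG
  rw [← tsum_mul_left, ← tsum_mul_left, ← hs1.tsum_sub hs0, (hs1.sub hs0).tsum_eq_zero_add]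
  have h0 := besselCoeff_eq_add_one hν 0
  simp only [Nat.cast_zero, zero_add] at h0
  simp only [pow_zero, mul_one, h0, sub_self, zero_add]
  refine tsum_congr fun m => ?_
  have h1 := besselCoeff_eq_add_one hν (m + 1)
  have h2 := succ_mul_besselCoeff_succ hν1 m
  push_cast at h1
  rw [h1, pow_succ]
  linear_combination z ^ m * z * h2

lemma besselJ_eq (ν : ℝ) {x : ℝ} (hx : 0 < x) :
    besselJ ν x = (x / 2) ^ ν * besselG ν (x ^ 2 / 4) := by
  unfold besselJ besselG
  rw [← tsum_mul_left]
  refine tsum_congr fun m => ?_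
  have hx2 : 0 < x / 2 := by positivity
  have e : (x / 2) ^ (2 * (m : ℝ)) = (x ^ 2 / 4) ^ m := by
    rw [Real.rpow_mul hx2.le, Real.rpow_natCast, Real.rpow_ofNat]
    ring
  rw [Real.rpow_add hx2, e, besselCoeff]
  ring

lemma hasDerivAt_besselG_comp {ν c a x : ℝ} (hν : 0 ≤ ν) (hx : 0 < x) :
    HasDerivAt (fun y : ℝ => besselG ν (c * y ^ a))
      (-besselG (ν + 1) (c * x ^ a) * (c * (a * x ^ (a - 1)))) x :=
  (hasDerivAt_besselG hν _).comp x ((Real.hasDerivAt_rpow_const (Or.inl hx.ne')).const_mul c)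

theorem stmt_1 (α β μ : ℝ) (hα0 : 0 ≤ α) (hα2 : α < 2)
    (hμ : μ < (1 - (α + β)) ^ 2 / 4) (j : ℝ) (hj : 0 < j) :
    let κ := (2 - α) / 2
    let ν := Real.sqrt ((1 - (α + β)) ^ 2 / 4 - μ) / κ
    let φ : ℝ → ℝ := fun x => x ^ ((1 - α - β) / 2) * besselJ ν (j * x ^ κ)
    ∀ x ∈ Ioo (0:ℝ) 1,
      -(deriv (fun y => y ^ α * deriv φ y) x) - β * x ^ (α - 1) * deriv φ x
        - μ / x ^ (2 - α) * φ x = κ ^ 2 * j ^ 2 * φ x := by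
  intro κ ν φ x hx
  have hx0 : 0 < x := hx.1
  have hκ : 0 < κ := by simp only [κ]; linarith
  have hν : 0 ≤ ν := by positivity
  have hν1 : 0 ≤ ν + 1 := by positivity
  set q := Real.sqrt ((1 - (α + β)) ^ 2 / 4 - μ) with hq
  have hq2 : q ^ 2 = (1 - (α + β)) ^ 2 / 4 - μ := Real.sq_sqrt (by linarith)
  have hκν : κ * ν = q := by simp only [ν]; exact mul_div_cancel₀ q hκ.ne'
  obtain ⟨s, hs⟩ : ∃ s, s = (1 - α - β) / 2 + q := ⟨_, rfl⟩
  obtain ⟨c, hc⟩ : ∃ c, c = j ^ 2 / 4 := ⟨_, rfl⟩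
  obtain ⟨C, hC⟩ : ∃ C, C = (j / 2) ^ ν := ⟨_, rfl⟩
  have hφ : ∀ y, 0 < y → φ y = C * (y ^ s * besselG ν (c * y ^ (2 - α))) := by
    intro y hy
    have hyκ : 0 < y ^ κ := Real.rpow_pos_of_pos hy _
    have e1 : (j * y ^ κ / 2) ^ ν = C * y ^ q := by
      rw [hC, ← hκν, Real.rpow_mul hy.le, ← Real.mul_rpow (by positivity) hyκ.le]
      ring_nf
    have e2 : (j * y ^ κ) ^ 2 / 4 = c * y ^ (2 - α) := by
      have : y ^ (2 - α) = (y ^ κ) ^ 2 := by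
        rw [← Real.rpow_natCast, ← Real.rpow_mul hy.le]
        congr 1
        simp only [κ]; push_cast; ring
      rw [this, hc]; ring
    simp only [φ]
    rw [besselJ_eq ν (by positivity), e1, e2, hs, Real.rpow_add hy]
    ring
  have hφ' : ∀ y, 0 < y → deriv φ y = C * (s * y ^ (s - 1) * besselG ν (c * y ^ (2 - α))
      - (2 - α) * c * y ^ (s + 1 - α) * besselG (ν + 1) (c * y ^ (2 - α))) := by
    intro y hy
    have h1 : HasDerivAt (fun y : ℝ => C * (y ^ s * besselG ν (c * y ^ (2 - α)))) _ y :=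
      ((Real.hasDerivAt_rpow_const (Or.inl hy.ne')).mul
        (hasDerivAt_besselG_comp hν hy)).const_mul C
    have h2 : φ =ᶠ[𝓝 y] fun y : ℝ => C * (y ^ s * besselG ν (c * y ^ (2 - α))) :=
      (eventually_gt_nhds hy).mono hφ
    rw [(h1.congr_of_eventuallyEq h2).deriv,
      show s + 1 - α = s + (2 - α - 1) by ring, Real.rpow_add hy]
    ring
  have hflux : (fun y => y ^ α * deriv φ y) =ᶠ[𝓝 x] fun y : ℝ =>
      C * (s * (y ^ (s + α - 1) * besselG ν (c * y ^ (2 - α)))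
      - (2 - α) * c * (y ^ (s + 1) * besselG (ν + 1) (c * y ^ (2 - α)))) := by
    refine (eventually_gt_nhds hx0).mono fun y hy => ?_
    dsimp only
    rw [hφ' y hy, show s + α - 1 = α + (s - 1) by ring, Real.rpow_add hy,
      show s + 1 = α + (s + 1 - α) by ring, Real.rpow_add hy]
    ring_nf
  have hD : HasDerivAt (fun y : ℝ =>
      C * (s * (y ^ (s + α - 1) * besselG ν (c * y ^ (2 - α)))
      - (2 - α) * c * (y ^ (s + 1) * besselG (ν + 1) (c * y ^ (2 - α))))) _ x :=
    ((((Real.hasDerivAt_rpow_const (Or.inl hx0.ne')).mul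
        (hasDerivAt_besselG_comp hν hx0)).const_mul s).sub
      (((Real.hasDerivAt_rpow_const (Or.inl hx0.ne')).mul
        (hasDerivAt_besselG_comp hν1 hx0)).const_mul ((2 - α) * c))).const_mul C
  rw [hflux.deriv_eq, hD.deriv, hφ' x hx0, hφ x hx0]
  have hrec := besselG_recurrence hν (c * x ^ (2 - α))
  -- All powers of `x` are expressed through `X = x ^ s`, `A = x ^ α` and `x` itself.
  have p1 : x ^ (s + α - 1) = x ^ s * x ^ α / x := by
    rw [Real.rpow_sub_one hx0.ne', Real.rpow_add hx0]
  have p2 : x ^ (s + α - 1 - 1) = x ^ s * x ^ α / x / x := by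
    rw [Real.rpow_sub_one hx0.ne', p1]
  have p3 : x ^ (2 - α) = x ^ 2 / x ^ α := by
    rw [Real.rpow_sub hx0, Real.rpow_ofNat]
  have p4 : x ^ (2 - α - 1) = x / x ^ α := by
    rw [Real.rpow_sub_one hx0.ne', p3]; field_simp
  have p5 : x ^ (s + 1) = x ^ s * x := Real.rpow_add_one hx0.ne' _
  have p6 : x ^ (s + 1 - 1) = x ^ s := by rw [add_sub_cancel_right]
  have p7 : x ^ (s + 1 - α) = x ^ s * x / x ^ α := by rw [Real.rpow_sub hx0, p5]
  have p8 : x ^ (s - 1) = x ^ s / x := Real.rpow_sub_one hx0.ne' _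
  have p9 : x ^ (α - 1) = x ^ α / x := Real.rpow_sub_one hx0.ne' _
  generalize besselG ν (c * x ^ (2 - α)) = G0 at *
  generalize besselG (ν + 1) (c * x ^ (2 - α)) = G1 at *
  generalize besselG (ν + 1 + 1) (c * x ^ (2 - α)) = G2 at *
  rw [p3] at hrec
  rw [p1, p2, p3, p4, p5, p6, p7, p8, p9]
  have hA : 0 < x ^ α := Real.rpow_pos_of_pos hx0 _
  generalize x ^ α = A at *
  generalize x ^ s = X at *
  have hκj : κ ^ 2 * j ^ 2 = (2 - α) ^ 2 * c := by rw [hc]; simp only [κ]; ring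
  have hind : s * (s + α - 1) + β * s + μ = 0 := by
    rw [hs]; linear_combination hq2
  have hG1 : 2 * s + 1 + β = (2 - α) * (ν + 1) := by
    rw [hs, ← hκν]; simp only [κ]; ring
  rw [hκj]
  -- Bessel's equation: this eliminates `G2`.
  have hrec' : c * x ^ 2 * G2 = A * ((ν + 1) * G1 - G0) := by
    rw [← hrec]; field_simp
  field_simp
  linear_combination C * X * (-A ^ 2 * G0 * hind + x ^ 2 * c * (2 - α) * A * G1 * hG1
    - (2 - α) ^ 2 * c * x ^ 2 * hrec')
end

section
/- Let 0 ≤ α < 2 and β ∈ ℝ with α + β < 1. Let u : (0,1) → ℝ be continuously differentiable with lim_{x→0⁺} u(x) = 0, lim_{x→1⁻} u(x) = 0, ∫₀¹ u(x)² x^β dx < ∞ and ∫₀¹ x^{α+β} u'(x)² dx < ∞. Then the generalized Hardy inequality holds: ((1−α−β)²/4) ∫₀¹ (u(x)²/x^{2−α−β}) dx ≤ ∫₀¹ x^{α+β} u'(x)² dx. -/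
open Set Filter MeasureTheory

/-!
Put `s = 1 - α - β > 0`, so that `x ^ (α + β) = x ^ (1 - s)`. The proof completes a square with a
regularised weight: for `k > 0` and `G = (s / 2) u² / (x ^ s + k)`,

  `x ^ (1 - s) u'² - G' - (s / 2)² x ^ (s - 1) u² / (x ^ s + k)²
      = x ^ (1 - s) (u' - (s / 2) x ^ (s - 1) u / (x ^ s + k))² ≥ 0`  (`hardy_pointwise`).

Integrating over `[c, d] ⊂ (0, 1)` bounds the regularised Hardy integral on `[c, d]` by the energy
plus `G c` (`hardy_truncated`), where `G d ≥ 0` is discarded. Since `k > 0`, `G c` is at most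
`(s / 2) u(c)² / k`; taking `k = |u c| + c` makes it at most `(s / 2) |u c|`, which tends to `0` with
`c` because `u` vanishes at `0`. Fatou's lemma along `c → 0`, `d → 1`, `k → 0` then gives the
inequality.
-/

/-- The completed square: here `p` stands for `x ^ (s - 1)`, `w` for `x ^ s + k`, `a` for `u x` and
`v` for `u' x`; the second summand on the left is the derivative of `(s / 2) u² / (x ^ s + k)`. -/
lemma hardy_pointwise (s p w a v : ℝ) (hp : 0 < p) (hw : 0 < w) :
    s ^ 2 / 4 * (p * a ^ 2 / w ^ 2)
      + (s / 2 * (2 * a * v) * w - s / 2 * a ^ 2 * (s * p)) / w ^ 2 ≤ p⁻¹ * v ^ 2 := by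
  have h : 0 ≤ p⁻¹ * (v - s / 2 * p * a / w) ^ 2 := by positivity
  have e : p⁻¹ * (v - s / 2 * p * a / w) ^ 2 = p⁻¹ * v ^ 2 - (s ^ 2 / 4 * (p * a ^ 2 / w ^ 2)
      + (s / 2 * (2 * a * v) * w - s / 2 * a ^ 2 * (s * p)) / w ^ 2) := by
    field_simp
    ring
  linarith

lemma hardy_truncated (s : ℝ) (hs : 0 < s) (u : ℝ → ℝ) (hu : ContDiffOn ℝ 1 u (Ioo 0 1))
    (c d k : ℝ) (hc : 0 < c) (hcd : c ≤ d) (hd : d < 1) (hk : 0 < k) :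
    ∫⁻ x in Ioc c d, ENNReal.ofReal (s ^ 2 / 4 * (x ^ (s - 1) * u x ^ 2 / (x ^ s + k) ^ 2))
      ≤ (∫⁻ x in Ioo (0 : ℝ) 1, ENNReal.ofReal (x ^ (1 - s) * deriv u x ^ 2))
        + ENNReal.ofReal (s / 2 * u c ^ 2 / (c ^ s + k)) := by
  have hsub : Icc c d ⊆ Ioo (0 : ℝ) 1 := fun x hx => ⟨hc.trans_le hx.1, hx.2.trans_lt hd⟩
  have hpos : ∀ x ∈ Icc c d, 0 < x := fun x hx => (hsub hx).1
  have hw : ∀ x ∈ Icc c d, 0 < x ^ s + k := fun x hx => by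
    have := Real.rpow_pos_of_pos (hpos x hx) s
    linarith
  have cu : ContinuousOn u (Icc c d) := hu.continuousOn.mono hsub
  have cv : ContinuousOn (deriv u) (Icc c d) :=
    (hu.continuousOn_deriv_of_isOpen isOpen_Ioo le_rfl).mono hsub
  have cp : ∀ r : ℝ, ContinuousOn (fun x : ℝ => x ^ r) (Icc c d) := fun r =>
    continuousOn_id.rpow_const fun x hx => Or.inl (hpos x hx).ne'
  have cw : ContinuousOn (fun x : ℝ => x ^ s + k) (Icc c d) := (cp s).add continuousOn_const
  set A : ℝ → ℝ := fun x => x ^ (1 - s) * deriv u x ^ 2 with hA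
  set B : ℝ → ℝ := fun x => s ^ 2 / 4 * (x ^ (s - 1) * u x ^ 2 / (x ^ s + k) ^ 2) with hB
  set G : ℝ → ℝ := fun x => s / 2 * u x ^ 2 / (x ^ s + k) with hG
  set D : ℝ → ℝ := fun x => (s / 2 * (2 * u x * deriv u x) * (x ^ s + k)
    - s / 2 * u x ^ 2 * (s * x ^ (s - 1))) / (x ^ s + k) ^ 2 with hD
  have cA : ContinuousOn A (Icc c d) := (cp _).mul (cv.pow 2)
  have cB : ContinuousOn B (Icc c d) :=
    continuousOn_const.mul (((cp _).mul (cu.pow 2)).div (cw.pow 2)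
      fun x hx => (pow_pos (hw x hx) 2).ne')
  have cD : ContinuousOn D (Icc c d) :=
    ((((continuousOn_const.mul ((continuousOn_const.mul cu).mul cv)).mul cw).sub
      ((continuousOn_const.mul (cu.pow 2)).mul (continuousOn_const.mul (cp _)))).div (cw.pow 2)
      fun x hx => (pow_pos (hw x hx) 2).ne')
  have hderiv : ∀ x ∈ Icc c d, HasDerivAt G (D x) x := by
    intro x hx
    have h1 : HasDerivAt u (deriv u x) x :=
      ((hu.differentiableOn one_ne_zero).differentiableAt
        (isOpen_Ioo.mem_nhds (hsub hx))).hasDerivAt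
    have h2 : HasDerivAt (fun x : ℝ => x ^ s + k) (s * x ^ (s - 1)) x :=
      (Real.hasDerivAt_rpow_const (Or.inl (hpos x hx).ne')).add_const k
    have h3 : HasDerivAt G _ x := ((h1.pow 2).const_mul (s / 2)).div h2 (hw x hx).ne'
    refine h3.congr_deriv ?_
    simp [hD]
  have hle : ∀ x ∈ Icc c d, B x + D x ≤ A x := by
    intro x hx
    have := hardy_pointwise s (x ^ (s - 1)) (x ^ s + k) (u x) (deriv u x)
      (Real.rpow_pos_of_pos (hpos x hx) _) (hw x hx)
    rwa [← Real.rpow_neg (hpos x hx).le, neg_sub] at this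
  have huIcc : uIcc c d = Icc c d := uIcc_of_le hcd
  have iA : IntervalIntegrable A volume c d := (huIcc ▸ cA).intervalIntegrable
  have iB : IntervalIntegrable B volume c d := (huIcc ▸ cB).intervalIntegrable
  have iD : IntervalIntegrable D volume c d := (huIcc ▸ cD).intervalIntegrable
  have hFTC : ∫ x in c..d, D x = G d - G c :=
    intervalIntegral.integral_eq_sub_of_hasDerivAt (fun x hx => hderiv x (huIcc ▸ hx)) iD
  have hmono := intervalIntegral.integral_mono_on hcd (iB.add iD) iA hle
  rw [intervalIntegral.integral_add iB iD, hFTC] at hmono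
  have hGd : 0 ≤ G d := by
    have := hw d ⟨hcd, le_rfl⟩
    positivity
  have hGc : 0 ≤ G c := by
    have := hw c ⟨le_rfl, hcd⟩
    positivity
  have hA0 : ∀ x ∈ Ioc c d, 0 ≤ A x := fun x hx => by
    have := hpos x ⟨hx.1.le, hx.2⟩
    positivity
  have hB0 : ∀ x ∈ Ioc c d, 0 ≤ B x := fun x hx => by
    have := hpos x ⟨hx.1.le, hx.2⟩
    positivity
  have hAB : ∫ x in Ioc c d, B x ≤ (∫ x in Ioc c d, A x) + G c := by
    rw [← intervalIntegral.integral_of_le hcd, ← intervalIntegral.integral_of_le hcd]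
    linarith
  have eA := ofReal_integral_eq_lintegral_ofReal iA.1
    ((ae_restrict_iff' measurableSet_Ioc).2 (ae_of_all _ hA0))
  have eB := ofReal_integral_eq_lintegral_ofReal iB.1
    ((ae_restrict_iff' measurableSet_Ioc).2 (ae_of_all _ hB0))
  calc ∫⁻ x in Ioc c d, ENNReal.ofReal (B x)
      = ENNReal.ofReal (∫ x in Ioc c d, B x) := eB.symm
    _ ≤ ENNReal.ofReal ((∫ x in Ioc c d, A x) + G c) := ENNReal.ofReal_le_ofReal hAB
    _ ≤ ENNReal.ofReal (∫ x in Ioc c d, A x) + ENNReal.ofReal (G c) := ENNReal.ofReal_add_le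
    _ = (∫⁻ x in Ioc c d, ENNReal.ofReal (A x)) + ENNReal.ofReal (G c) := by rw [eA]
    _ ≤ _ := by
      gcongr
      exact Ioc_subset_Icc_self.trans hsub

theorem stmt_3 (α β : ℝ) (hα0 : 0 ≤ α) (hα2 : α < 2) (hαβ : α + β < 1)
    (u : ℝ → ℝ) (hu : ContDiffOn ℝ 1 u (Ioo 0 1))
    (h0 : Tendsto u (nhdsWithin 0 (Ioi 0)) (nhds 0))
    (h1 : Tendsto u (nhdsWithin 1 (Iio 1)) (nhds 0))
    (hL2 : ∫⁻ x in Ioo (0:ℝ) 1, ENNReal.ofReal (u x ^ 2 * x ^ β) < ⊤)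
    (hH1 : ∫⁻ x in Ioo (0:ℝ) 1, ENNReal.ofReal (x ^ (α + β) * deriv u x ^ 2) < ⊤) :
    ENNReal.ofReal ((1 - α - β) ^ 2 / 4)
        * ∫⁻ x in Ioo (0:ℝ) 1, ENNReal.ofReal (u x ^ 2 / x ^ (2 - α - β))
      ≤ ∫⁻ x in Ioo (0:ℝ) 1, ENNReal.ofReal (x ^ (α + β) * deriv u x ^ 2) := by
  obtain ⟨s, hs⟩ : ∃ s : ℝ, s = 1 - α - β := ⟨_, rfl⟩
  have hs0 : 0 < s := by linarith
  rw [← hs, show 2 - α - β = 1 + s by linarith, show α + β = 1 - s by linarith,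
    ← lintegral_const_mul' _ _ ENNReal.ofReal_ne_top]
  set I := ∫⁻ x in Ioo (0:ℝ) 1, ENNReal.ofReal (x ^ (1 - s) * deriv u x ^ 2) with hI
  -- The offset `2` guarantees `c n ≤ 1 - c n`.
  set c : ℕ → ℝ := fun n => 1 / ((n : ℝ) + 2) with hc
  have hc0 : ∀ n, 0 < c n := fun n => by positivity
  have hc2 : ∀ n, c n ≤ 1 / 2 := fun n => by
    apply one_div_le_one_div_of_le two_pos
    have : (0 : ℝ) ≤ n := n.cast_nonneg
    linarith
  have hclim : Tendsto c atTop (nhds 0) := by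
    have : Tendsto (fun n : ℕ => (n : ℝ) + 2) atTop atTop :=
      tendsto_atTop_add_const_right _ _ tendsto_natCast_atTop_atTop
    simpa only [hc, one_div, Function.comp_def] using tendsto_inv_atTop_zero.comp this
  have huc : Tendsto (fun n => |u (c n)|) atTop (nhds 0) := by
    have : Tendsto c atTop (nhdsWithin 0 (Ioi 0)) :=
      tendsto_nhdsWithin_iff.2 ⟨hclim, Eventually.of_forall hc0⟩
    simpa using (h0.comp this).abs
  set k : ℕ → ℝ := fun n => |u (c n)| + c n with hk
  have hk0 : ∀ n, 0 < k n := fun n => add_pos_of_nonneg_of_pos (abs_nonneg _) (hc0 n)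
  have hklim : Tendsto k atTop (nhds 0) := by simpa using huc.add hclim
  set B : ℕ → ℝ → ℝ :=
    fun n x => s ^ 2 / 4 * (x ^ (s - 1) * u x ^ 2 / (x ^ s + k n) ^ 2) with hB
  set F : ℕ → ℝ → ENNReal :=
    fun n => (Ioc (c n) (1 - c n)).indicator fun x => ENNReal.ofReal (B n x) with hF
  have hbound : ∀ n, ∫⁻ x in Ioo (0:ℝ) 1, F n x ≤ I + ENNReal.ofReal (s / 2 * |u (c n)|) := by
    intro n
    have hcn := hc0 n
    have hcn2 := hc2 n
    have hkn := hk0 n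
    have hle : s / 2 * u (c n) ^ 2 / (c n ^ s + k n) ≤ s / 2 * |u (c n)| := by
      have hp := Real.rpow_pos_of_pos hcn s
      rw [div_le_iff₀ (by positivity), mul_assoc, ← sq_abs]
      have : |u (c n)| ≤ c n ^ s + k n := by simp only [hk]; linarith
      rw [sq]
      gcongr
    calc ∫⁻ x in Ioo (0:ℝ) 1, F n x
        ≤ ∫⁻ x, F n x := setLIntegral_le_lintegral _ _
      _ = ∫⁻ x in Ioc (c n) (1 - c n), ENNReal.ofReal (B n x) :=
          lintegral_indicator measurableSet_Ioc _
      _ ≤ I + ENNReal.ofReal (s / 2 * u (c n) ^ 2 / (c n ^ s + k n)) :=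
          hardy_truncated s hs0 u hu (c n) (1 - c n) (k n) hcn (by linarith) (by linarith) hkn
      _ ≤ _ := by gcongr
  have hmeas : ∀ n, AEMeasurable (F n) (volume.restrict (Ioo (0:ℝ) 1)) := by
    intro n
    refine AEMeasurable.indicator (AEMeasurable.ennreal_ofReal ?_) measurableSet_Ioc
    have cp : ∀ r : ℝ, ContinuousOn (fun x : ℝ => x ^ r) (Ioo 0 1) := fun r =>
      continuousOn_id.rpow_const fun x hx => Or.inl hx.1.ne'
    refine ContinuousOn.aemeasurable ?_ measurableSet_Ioo
    refine continuousOn_const.mul (((cp _).mul (hu.continuousOn.pow 2)).div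
      (((cp s).add continuousOn_const).pow 2) fun x hx => ?_)
    have := Real.rpow_pos_of_pos hx.1 s
    have := hk0 n
    positivity
  have hlim : ∀ x ∈ Ioo (0:ℝ) 1, Tendsto (fun n => F n x) atTop
      (nhds (ENNReal.ofReal (s ^ 2 / 4) * ENNReal.ofReal (u x ^ 2 / x ^ (1 + s)))) := by
    intro x hx
    have hxs := Real.rpow_pos_of_pos hx.1 s
    have hBl : Tendsto (fun n => B n x) atTop
        (nhds (s ^ 2 / 4 * (x ^ (s - 1) * u x ^ 2 / (x ^ s + 0) ^ 2))) :=
      tendsto_const_nhds.mul (tendsto_const_nhds.div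
        ((tendsto_const_nhds.add hklim).pow 2) (by positivity))
    have e : x ^ (s - 1) * u x ^ 2 / (x ^ s + 0) ^ 2 = u x ^ 2 / x ^ (1 + s) := by
      have hx0 := hx.1
      rw [Real.rpow_sub hx0, Real.rpow_add hx0, Real.rpow_one, add_zero]
      field_simp
    rw [e] at hBl
    rw [← ENNReal.ofReal_mul (by positivity)]
    refine (ENNReal.tendsto_ofReal hBl).congr' ?_
    filter_upwards [hclim.eventually_lt_const hx.1,
      hclim.eventually_lt_const (sub_pos.2 hx.2)] with n hn1 hn2
    have hmem : x ∈ Ioc (c n) (1 - c n) := ⟨hn1, by linarith⟩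
    simp only [hF, indicator_of_mem hmem]
  have hR : Tendsto (fun n => I + ENNReal.ofReal (s / 2 * |u (c n)|)) atTop (nhds I) := by
    have := (ENNReal.tendsto_ofReal (huc.const_mul (s / 2))).const_add I
    simpa using this
  calc ∫⁻ x in Ioo (0:ℝ) 1, ENNReal.ofReal (s ^ 2 / 4) * ENNReal.ofReal (u x ^ 2 / x ^ (1 + s))
      = ∫⁻ x in Ioo (0:ℝ) 1, liminf (fun n => F n x) atTop :=
        setLIntegral_congr_fun measurableSet_Ioo fun x hx => (hlim x hx).liminf_eq.symm
    _ ≤ liminf (fun n => ∫⁻ x in Ioo (0:ℝ) 1, F n x) atTop := lintegral_liminf_le' hmeas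
    _ ≤ liminf (fun n => I + ENNReal.ofReal (s / 2 * |u (c n)|)) atTop :=
        liminf_le_liminf (Eventually.of_forall hbound)
    _ = I := hR.liminf_eq
end

section
/- Let 0 ≤ α < 2 and β ∈ ℝ with α + β < 1. Let u : (0,1) → ℝ be continuously differentiable with lim_{x→0⁺} u(x) = 0, lim_{x→1⁻} u(x) = 0, ∫₀¹ u(x)² x^β dx < ∞ and ∫₀¹ x^{α+β} u'(x)² dx < ∞. Then the weighted Poincaré inequality holds: ∫₀¹ |u(x)|² x^β dx ≤ (1/((2−α)(1−α−β))) ∫₀¹ x^{α+β} |u'(x)|² dx. -/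
/-!
The proof is a pointwise bound followed by one integration. Write `c = α + β < 1` and let `K` be
the weighted energy `∫₀¹ s ^ c * u'(s) ^ 2 ds`. For `0 < a < x < 1`, the fundamental theorem of
calculus and the Cauchy–Schwarz inequality applied to `u' = s ^ (-c/2) * (s ^ (c/2) * u')` give
`(u x - u a) ^ 2 ≤ (∫ₐˣ s ^ (-c) ds) * K ≤ x ^ (1 - c) / (1 - c) * K` (`sq_sub_le_energy`,
`integral_rpow_neg_le`). Letting `a → 0⁺` yields `u x ^ 2 * x ^ β ≤ K / (1 - c) * x ^ (1 - α)`,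
and integrating `x ^ (1 - α)` over `(0, 1)` produces the remaining factor `1 / (2 - α)`.
-/

open Set Filter MeasureTheory

/-- Cauchy–Schwarz with weights `s ^ (-c)` and `s ^ c`, applied to the increment
`v x - v a = ∫ₐˣ v'`. -/
lemma sq_sub_le_energy (c : ℝ) (v v' : ℝ → ℝ) {a x : ℝ} (ha : 0 < a) (hax : a ≤ x)
    (hv : ∀ s ∈ Icc a x, HasDerivAt v (v' s) s) (hv' : ContinuousOn v' (Icc a x)) :
    (v x - v a) ^ 2 ≤ (∫ s in a..x, s ^ (-c)) * ∫ s in a..x, s ^ c * v' s ^ 2 := by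
  have hne : ∀ s ∈ Icc a x, s ≠ 0 := fun s hs => (ha.trans_le hs.1).ne'
  have hpow : ∀ p : ℝ, ContinuousOn (fun s : ℝ => s ^ p) (Icc a x) := fun p =>
    continuousOn_id.rpow_const fun s hs => Or.inl (hne s hs)
  have hi : ∀ f : ℝ → ℝ, ContinuousOn f (Icc a x) → IntervalIntegrable f volume a x :=
    fun f hf => hf.intervalIntegrable_of_Icc hax
  have hA := hi _ (hpow (-c))
  have hB := hi _ hv'
  have hC := hi (fun s => s ^ c * v' s ^ 2) ((hpow c).mul (hv'.pow 2))
  have hFTC : ∫ s in a..x, v' s = v x - v a :=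
    intervalIntegral.integral_eq_sub_of_hasDerivAt
      (fun s hs => hv s (by rwa [uIcc_of_le hax] at hs)) hB
  -- The quadratic `t ↦ ∫ₐˣ s ^ (-c) * (t + s ^ c * v' s) ^ 2` is nonnegative, so its
  -- discriminant is nonpositive.
  have hquad : ∀ t : ℝ, 0 ≤ (∫ s in a..x, s ^ (-c)) * (t * t) + (2 * (v x - v a)) * t
      + ∫ s in a..x, s ^ c * v' s ^ 2 := by
    intro t
    have hnn : 0 ≤ ∫ s in a..x, ((t * t) * s ^ (-c) + (2 * t) * v' s + s ^ c * v' s ^ 2) := by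
      refine intervalIntegral.integral_nonneg hax fun s hs => ?_
      have hs0 : 0 < s := ha.trans_le hs.1
      have hmul : s ^ (-c) * s ^ c = 1 := by
        rw [← Real.rpow_add hs0, neg_add_cancel, Real.rpow_zero]
      have hp := (Real.rpow_pos_of_pos hs0 (-c)).le
      have hkey : (t * t) * s ^ (-c) + (2 * t) * v' s + s ^ c * v' s ^ 2
          = s ^ (-c) * (t + s ^ c * v' s) ^ 2 := by
        linear_combination (-(2 * t * v' s) - s ^ c * v' s ^ 2) * hmul
      rw [hkey]
      positivity
    rw [intervalIntegral.integral_add ((hA.const_mul _).add (hB.const_mul _)) hC,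
      intervalIntegral.integral_add (hA.const_mul _) (hB.const_mul _),
      intervalIntegral.integral_const_mul, intervalIntegral.integral_const_mul, hFTC] at hnn
    linarith
  have hd := discrim_le_zero hquad
  unfold discrim at hd
  linarith

lemma integral_rpow_neg_le {c a x : ℝ} (hc : c < 1) (ha : 0 < a) :
    ∫ s in a..x, s ^ (-c) ≤ x ^ (1 - c) / (1 - c) := by
  have hc' : 0 < 1 - c := by linarith
  rw [integral_rpow (Or.inl (by linarith)), show -c + 1 = 1 - c by ring]
  gcongr
  have := Real.rpow_nonneg ha.le (1 - c)
  linarith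

theorem stmt_4 (α β : ℝ) (hα0 : 0 ≤ α) (hα2 : α < 2) (hαβ : α + β < 1)
    (u : ℝ → ℝ) (hu : ContDiffOn ℝ 1 u (Ioo 0 1))
    (h0 : Tendsto u (nhdsWithin 0 (Ioi 0)) (nhds 0))
    (h1 : Tendsto u (nhdsWithin 1 (Iio 1)) (nhds 0))
    (hL2 : ∫⁻ x in Ioo (0:ℝ) 1, ENNReal.ofReal (u x ^ 2 * x ^ β) < ⊤)
    (hH1 : ∫⁻ x in Ioo (0:ℝ) 1, ENNReal.ofReal (x ^ (α + β) * deriv u x ^ 2) < ⊤) :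
    ∫⁻ x in Ioo (0:ℝ) 1, ENNReal.ofReal (|u x| ^ 2 * x ^ β)
      ≤ ENNReal.ofReal (1 / ((2 - α) * (1 - α - β)))
          * ∫⁻ x in Ioo (0:ℝ) 1, ENNReal.ofReal (x ^ (α + β) * |deriv u x| ^ 2) := by
  simp only [sq_abs]
  set I := ∫⁻ x in Ioo (0:ℝ) 1, ENNReal.ofReal (x ^ (α + β) * deriv u x ^ 2) with hI
  set K := I.toReal with hK
  have hK0 : 0 ≤ K := ENNReal.toReal_nonneg
  have hγ : 0 < 1 - (α + β) := by linarith
  have hder : ∀ s ∈ Ioo (0:ℝ) 1, HasDerivAt u (deriv u s) s := fun s hs =>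
    ((hu.differentiableOn (by simp)).differentiableAt (isOpen_Ioo.mem_nhds hs)).hasDerivAt
  have hcont : ContinuousOn (deriv u) (Ioo 0 1) :=
    hu.continuousOn_deriv_of_isOpen isOpen_Ioo le_rfl
  have hinc : ∀ x ∈ Ioo (0:ℝ) 1, ∀ a ∈ Ioo 0 x,
      (u x - u a) ^ 2 ≤ x ^ (1 - (α + β)) / (1 - (α + β)) * K := by
    intro x hx a ha
    have hsub : Icc a x ⊆ Ioo 0 1 := fun s hs => ⟨ha.1.trans_le hs.1, hs.2.trans_lt hx.2⟩
    have hpos : ∀ s ∈ Icc a x, 0 ≤ s ^ (α + β) * deriv u s ^ 2 := fun s hs =>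
      mul_nonneg (Real.rpow_nonneg (hsub hs).1.le _) (sq_nonneg _)
    have hci : ContinuousOn (fun s => s ^ (α + β) * deriv u s ^ 2) (Icc a x) :=
      (continuousOn_id.rpow_const fun s hs => Or.inl (hsub hs).1.ne').mul
        ((hcont.mono hsub).pow 2)
    have hE : ∫ s in a..x, s ^ (α + β) * deriv u s ^ 2 ≤ K := by
      rw [intervalIntegral.integral_of_le ha.2.le, ← integral_Icc_eq_integral_Ioc,
        integral_eq_lintegral_of_nonneg_ae
          ((ae_restrict_iff' measurableSet_Icc).2 (ae_of_all _ hpos))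
          (hci.aestronglyMeasurable measurableSet_Icc)]
      exact ENNReal.toReal_mono hH1.ne (lintegral_mono_set hsub)
    calc (u x - u a) ^ 2
        ≤ (∫ s in a..x, s ^ (-(α + β))) * ∫ s in a..x, s ^ (α + β) * deriv u s ^ 2 :=
          sq_sub_le_energy (α + β) u (deriv u) ha.1 ha.2.le (fun s hs => hder s (hsub hs))
            (hcont.mono hsub)
      _ ≤ x ^ (1 - (α + β)) / (1 - (α + β)) * K :=
          mul_le_mul (integral_rpow_neg_le hαβ ha.1) hE
            (intervalIntegral.integral_nonneg ha.2.le hpos)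
            (div_nonneg (Real.rpow_nonneg hx.1.le _) hγ.le)
  have hpt : ∀ x ∈ Ioo (0:ℝ) 1, u x ^ 2 * x ^ β ≤ K / (1 - (α + β)) * x ^ (1 - α) := by
    intro x hx
    have hlim : Tendsto (fun a => (u x - u a) ^ 2) (nhdsWithin 0 (Ioi 0)) (nhds (u x ^ 2)) := by
      simpa using (h0.const_sub (u x)).pow 2
    have hle : u x ^ 2 ≤ x ^ (1 - (α + β)) / (1 - (α + β)) * K :=
      le_of_tendsto hlim (by
        filter_upwards [Ioo_mem_nhdsGT hx.1] with a ha using hinc x hx a ha)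
    have hexp : x ^ (1 - (α + β)) * x ^ β = x ^ (1 - α) := by
      rw [← Real.rpow_add hx.1]
      congr 1
      ring
    calc u x ^ 2 * x ^ β ≤ x ^ (1 - (α + β)) / (1 - (α + β)) * K * x ^ β :=
          mul_le_mul_of_nonneg_right hle (Real.rpow_nonneg hx.1.le _)
      _ = K / (1 - (α + β)) * x ^ (1 - α) := by
          rw [← hexp]
          ring
  have hint : IntegrableOn (fun x : ℝ => K / (1 - (α + β)) * x ^ (1 - α)) (Ioo 0 1) := by
    have h := intervalIntegral.intervalIntegrable_rpow' (a := 0) (b := 1) (r := 1 - α)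
      (by linarith)
    rw [intervalIntegrable_iff_integrableOn_Ioo_of_le zero_le_one] at h
    exact h.const_mul _
  have hval : ∫ x in Ioo (0:ℝ) 1, K / (1 - (α + β)) * x ^ (1 - α)
      = 1 / ((2 - α) * (1 - α - β)) * K := by
    have h2 : 2 - α ≠ 0 := by linarith
    have h3 : 1 - α - β ≠ 0 := by linarith
    rw [← integral_Ioc_eq_integral_Ioo, ← intervalIntegral.integral_of_le zero_le_one,
      intervalIntegral.integral_const_mul, integral_rpow (Or.inl (by linarith)),
      show 1 - α + 1 = 2 - α by ring, show 1 - (α + β) = 1 - α - β by ring,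
      Real.one_rpow, Real.zero_rpow h2]
    field_simp
    ring
  calc ∫⁻ x in Ioo (0:ℝ) 1, ENNReal.ofReal (u x ^ 2 * x ^ β)
      ≤ ∫⁻ x in Ioo (0:ℝ) 1, ENNReal.ofReal (K / (1 - (α + β)) * x ^ (1 - α)) :=
        setLIntegral_mono' measurableSet_Ioo fun x hx => ENNReal.ofReal_le_ofReal (hpt x hx)
    _ = ENNReal.ofReal (1 / ((2 - α) * (1 - α - β)) * K) := by
        rw [← hval, ofReal_integral_eq_lintegral_ofReal hint]
        exact (ae_restrict_iff' measurableSet_Ioo).2 (ae_of_all _ fun x hx =>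
          mul_nonneg (div_nonneg hK0 hγ.le) (Real.rpow_nonneg hx.1.le _))
    _ = ENNReal.ofReal (1 / ((2 - α) * (1 - α - β))) * I := by
        rw [ENNReal.ofReal_mul' hK0, hK, ENNReal.ofReal_toReal hH1.ne]
end

section
/- Let 0 ≤ α < 2 and β, μ ∈ ℝ with α + β < 1. Let u : (0,1) → ℝ be twice continuously differentiable and v : (0,1) → ℝ continuously differentiable, both with vanishing boundary limits at 0⁺ and 1⁻, and with ∫₀¹ w² x^β dx < ∞ and ∫₀¹ x^{α+β} (w')² dx < ∞ for w = u and w = v. Assume in addition that Au, given by (Au)(x) = −(x^α u'(x))' − β x^{α−1} u'(x) − (μ/x^{2−α}) u(x), satisfies ∫₀¹ (Au)(x)² x^β dx < ∞. Then lim_{x→0⁺} x^{α+β} u'(x) v(x) = 0 and lim_{x→1⁻} x^{α+β} u'(x) v(x) = 0. -/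
/-!
Write `γ = α + β < 1` and let `p = x^γ u'` be the flux. The operator in divergence form reads
`p' = -x^β Au - μ x^{γ-2} u`.

Since `v(0⁺) = 0`, Cauchy–Schwarz with the weight `t^γ` gives
`v(x)² ≤ (∫₀ˣ t^γ v'²) x^{1-γ}/(1-γ)` (`sq_le_energy`), hence `x^{γ-1} v(x)² → 0` as `x → 0⁺`
(`tendsto_sq_mul`); for `u` the same estimate gives `u² ≤ K x^{1-γ}` on `(0,1)`.

Integrating the equation for `p` over `[a, b] ⊂ (0,1)` and using Cauchy–Schwarz on each term gives
`(p(b) - p(a))² ≤ C a^{γ-1}` (`flux_sub_sq_le`); the term with `Au` is handled with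
`t^β ≤ t^{γ-2}`, which is where `α < 2` enters. With `b = 1/2` and `a = x → 0⁺` this yields
`p² = O(x^{γ-1})`, so `(p v)² → 0` at `0`. With `a = 1/2` and `b = x → 1⁻` it yields that `p` is
bounded near `1`, so `p v → 0` there because `v(1⁻) = 0`.
-/

open Set Filter MeasureTheory

/-- The degenerate/singular second-order operator
`(Au)(x) = −(x^α u'(x))' − β x^{α−1} u'(x) − (μ/x^{2−α}) u(x)`. -/
noncomputable def Aop (α β μ : ℝ) (u : ℝ → ℝ) : ℝ → ℝ := fun x =>
  -(deriv (fun y => y ^ α * deriv u y) x) - β * x ^ (α - 1) * deriv u x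
    - μ / x ^ (2 - α) * u x

/-- Weighted Cauchy–Schwarz inequality `(∫ f)² ≤ (∫ w f²) (∫ 1/w)` on a compact interval. -/
lemma sq_integral_le {a b : ℝ} (hab : a < b) {f w : ℝ → ℝ} (hf : ContinuousOn f (Icc a b))
    (hw : ContinuousOn w (Icc a b)) (hpos : ∀ x ∈ Icc a b, 0 < w x) :
    (∫ x in a..b, f x) ^ 2 ≤ (∫ x in a..b, w x * f x ^ 2) * ∫ x in a..b, (w x)⁻¹ := by
  have hwi : ContinuousOn (fun x => (w x)⁻¹) (Icc a b) := hw.inv₀ fun x hx => (hpos x hx).ne'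
  have ii : ∀ {g : ℝ → ℝ}, ContinuousOn g (Icc a b) → IntervalIntegrable g volume a b :=
    fun hg => ContinuousOn.intervalIntegrable (by rwa [uIcc_of_le hab.le])
  have hW : 0 < ∫ x in a..b, (w x)⁻¹ :=
    intervalIntegral.intervalIntegral_pos_of_pos_on (ii hwi)
      (fun x hx => inv_pos.2 (hpos x (Ioo_subset_Icc_self hx))) hab
  set W := ∫ x in a..b, (w x)⁻¹ with hWdef
  set D := ∫ x in a..b, f x with hD
  -- the mean of `f` relative to `1/w` is the constant minimising `∫ w (f - c/w)²`
  set c := D / W with hc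
  have h0 : 0 ≤ ∫ x in a..b, (w x * f x ^ 2 - 2 * c * f x + c ^ 2 * (w x)⁻¹) := by
    refine intervalIntegral.integral_nonneg hab.le fun x hx => ?_
    have hx' := hpos x hx
    have : w x * f x ^ 2 - 2 * c * f x + c ^ 2 * (w x)⁻¹ = w x * (f x - c * (w x)⁻¹) ^ 2 := by
      field_simp; ring
    rw [this]; positivity
  have hwf : ContinuousOn (fun x => w x * f x ^ 2) (Icc a b) := hw.mul (hf.pow 2)
  rw [intervalIntegral.integral_add (((ii hwf).sub ((ii hf).const_mul _)))
      ((ii hwi).const_mul _),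
    intervalIntegral.integral_sub (ii hwf) ((ii hf).const_mul _),
    intervalIntegral.integral_const_mul, intervalIntegral.integral_const_mul, ← hWdef, ← hD] at h0
  have h1 := mul_nonneg h0 hW.le
  have h2 : (∫ x in a..b, w x * f x ^ 2) * W - D ^ 2
      = ((∫ x in a..b, w x * f x ^ 2) - 2 * c * D + c ^ 2 * W) * W := by
    rw [hc]; field_simp; ring
  linarith

lemma integrableOn_of_lintegral {g : ℝ → ℝ} (hg : ContinuousOn g (Ioo 0 1))
    (h0 : ∀ x ∈ Ioo (0:ℝ) 1, 0 ≤ g x)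
    (h : ∫⁻ x in Ioo (0:ℝ) 1, ENNReal.ofReal (g x) < ⊤) : IntegrableOn g (Ioo 0 1) := by
  refine ⟨hg.aestronglyMeasurable measurableSet_Ioo, ?_⟩
  rw [hasFiniteIntegral_iff_ofReal]
  · exact h
  · exact (ae_restrict_iff' measurableSet_Ioo).2 (Eventually.of_forall h0)

lemma integral_sub_le {g : ℝ → ℝ} (hg : IntegrableOn g (Ioo 0 1))
    (h0 : ∀ x ∈ Ioo (0:ℝ) 1, 0 ≤ g x) {a b : ℝ} (ha : 0 ≤ a) (hab : a ≤ b) (hb : b < 1) :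
    ∫ x in a..b, g x ≤ ∫ x in Ioo (0:ℝ) 1, g x := by
  rw [intervalIntegral.integral_of_le hab]
  exact setIntegral_mono_set hg ((ae_restrict_iff' measurableSet_Ioo).2 (Eventually.of_forall h0))
    (LE.le.eventuallyLE fun x hx => ⟨ha.trans_lt hx.1, hx.2.trans_lt hb⟩)

lemma continuousOn_rpow_Ioo (r : ℝ) : ContinuousOn (fun x : ℝ => x ^ r) (Ioo 0 1) :=
  fun x hx => (Real.continuousAt_rpow_const x r (Or.inl hx.1.ne')).continuousWithinAt

lemma Icc_sub {a b : ℝ} (ha : 0 < a) (hb : b < 1) : Icc a b ⊆ Ioo (0:ℝ) 1 :=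
  fun _ hx => ⟨ha.trans_le hx.1, hx.2.trans_lt hb⟩

/-- Trace estimate at `0`: `v(x)² ≤ (∫₀ˣ t^γ v'²) x^{1-γ}/(1-γ)`. -/
lemma sq_le_energy {γ : ℝ} (hγ : γ < 1) {v : ℝ → ℝ} (hv : ContDiffOn ℝ 1 v (Ioo 0 1))
    (hv0 : Tendsto v (nhdsWithin 0 (Ioi 0)) (nhds 0))
    (hE : IntegrableOn (fun x => x ^ γ * deriv v x ^ 2) (Ioo 0 1)) {x : ℝ}
    (hx : x ∈ Ioo (0:ℝ) 1) :
    v x ^ 2 ≤ (∫ t in (0:ℝ)..x, t ^ γ * deriv v t ^ 2) * (x ^ (1 - γ) / (1 - γ)) := by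
  have hdc : ContinuousOn (deriv v) (Ioo 0 1) :=
    hv.continuousOn_deriv_of_isOpen isOpen_Ioo le_rfl
  have hlim : Tendsto (fun a => (v x - v a) ^ 2) (nhdsWithin 0 (Ioi 0)) (nhds ((v x - 0) ^ 2)) :=
    (tendsto_const_nhds.sub hv0).pow 2
  rw [sub_zero] at hlim
  refine le_of_tendsto hlim ?_
  filter_upwards [Ioo_mem_nhdsGT hx.1] with a ha
  have hsub := Icc_sub ha.1 hx.2
  have key := sq_integral_le ha.2 (hdc.mono hsub) ((continuousOn_rpow_Ioo γ).mono hsub)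
    (fun t ht => Real.rpow_pos_of_pos (hsub ht).1 γ)
  have hftc : ∫ t in a..x, deriv v t = v x - v a := by
    refine intervalIntegral.integral_deriv_eq_sub (fun t ht => ?_) ?_
    · rw [uIcc_of_le ha.2.le] at ht
      exact (hv.differentiableOn one_ne_zero).differentiableAt (isOpen_Ioo.mem_nhds (hsub ht))
    · exact ContinuousOn.intervalIntegrable (by rw [uIcc_of_le ha.2.le]; exact hdc.mono hsub)
  rw [hftc] at key
  have hw : ∫ t in a..x, (t ^ γ)⁻¹ ≤ x ^ (1 - γ) / (1 - γ) := by
    have : ∫ t in a..x, (t ^ γ)⁻¹ = ∫ t in a..x, t ^ (-γ) := by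
      refine intervalIntegral.integral_congr fun t ht => ?_
      rw [uIcc_of_le ha.2.le] at ht
      exact (Real.rpow_neg (hsub ht).1.le γ).symm
    rw [this, integral_rpow (Or.inl (by linarith)), show -γ + 1 = 1 - γ by ring]
    have := Real.rpow_pos_of_pos ha.1 (1 - γ)
    gcongr
    linarith
  have hnn : ∀ t ∈ Ioo (0:ℝ) 1, 0 ≤ t ^ γ * deriv v t ^ 2 := fun t ht =>
    mul_nonneg (Real.rpow_nonneg ht.1.le _) (sq_nonneg _)
  have hii : ∀ {c d : ℝ}, 0 ≤ c → c ≤ d → d < 1 →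
      IntervalIntegrable (fun t => t ^ γ * deriv v t ^ 2) volume c d := fun hc hcd hd =>
    (intervalIntegrable_iff_integrableOn_Ioc_of_le hcd).2
      (hE.mono_set fun t ht => ⟨hc.trans_lt ht.1, ht.2.trans_lt hd⟩)
  have he : ∫ t in a..x, t ^ γ * deriv v t ^ 2 ≤ ∫ t in (0:ℝ)..x, t ^ γ * deriv v t ^ 2 := by
    rw [← intervalIntegral.integral_add_adjacent_intervals
      (hii le_rfl ha.1.le (ha.2.trans hx.2)) (hii ha.1.le ha.2.le hx.2)]
    have : 0 ≤ ∫ t in (0:ℝ)..a, t ^ γ * deriv v t ^ 2 := by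
      rw [intervalIntegral.integral_of_le ha.1.le]
      exact setIntegral_nonneg measurableSet_Ioc fun t ht =>
        hnn t ⟨ht.1, ht.2.trans_lt (ha.2.trans hx.2)⟩
    linarith
  have hw0 : 0 ≤ ∫ t in a..x, (t ^ γ)⁻¹ := intervalIntegral.integral_nonneg ha.2.le fun t ht =>
    inv_nonneg.2 (Real.rpow_nonneg (hsub ht).1.le _)
  have he0 : 0 ≤ ∫ t in a..x, t ^ γ * deriv v t ^ 2 :=
    intervalIntegral.integral_nonneg ha.2.le fun t ht => hnn t (hsub ht)
  exact key.trans (mul_le_mul he hw hw0 (he0.trans he))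

/-- The trace of `v` at `0` vanishes at the rate `v(x) = o(x^{(1-γ)/2})`. -/
lemma tendsto_sq_mul {γ : ℝ} (hγ : γ < 1) {v : ℝ → ℝ} (hv : ContDiffOn ℝ 1 v (Ioo 0 1))
    (hv0 : Tendsto v (nhdsWithin 0 (Ioi 0)) (nhds 0))
    (hE : IntegrableOn (fun x => x ^ γ * deriv v x ^ 2) (Ioo 0 1)) :
    Tendsto (fun x => x ^ (γ - 1) * v x ^ 2) (nhdsWithin 0 (Ioi 0)) (nhds 0) := by
  have hE' : Tendsto (fun x => ∫ t in (0:ℝ)..x, t ^ γ * deriv v t ^ 2)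
      (nhdsWithin 0 (Ioi 0)) (nhds 0) := by
    have hi : IntegrableOn (fun x => x ^ γ * deriv v x ^ 2) (uIcc 0 1) := by
      rw [uIcc_of_le zero_le_one]; rwa [integrableOn_Icc_iff_integrableOn_Ioo]
    have := intervalIntegral.continuousOn_primitive_interval hi 0 left_mem_uIcc
    rw [uIcc_of_le zero_le_one] at this
    have h2 := (this.mono Ioc_subset_Icc_self).tendsto
    rw [intervalIntegral.integral_same] at h2
    exact h2.mono_left (nhdsWithin_le_of_mem (Ioc_mem_nhdsGT zero_lt_one))
  have hlim := hE'.mul_const ((1 - γ)⁻¹)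
  rw [zero_mul] at hlim
  refine tendsto_of_tendsto_of_tendsto_of_le_of_le' tendsto_const_nhds hlim ?_ ?_
  · filter_upwards [Ioo_mem_nhdsGT zero_lt_one] with x hx
    exact mul_nonneg (Real.rpow_nonneg hx.1.le _) (sq_nonneg _)
  · filter_upwards [Ioo_mem_nhdsGT zero_lt_one] with x hx
    have h := mul_le_mul_of_nonneg_left (sq_le_energy hγ hv hv0 hE hx)
      (Real.rpow_nonneg hx.1.le (γ - 1))
    refine h.trans_eq ?_
    have : x ^ (γ - 1) * x ^ (1 - γ) = 1 := by
      rw [← Real.rpow_add hx.1]; norm_num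
    calc _ = (x ^ (γ - 1) * x ^ (1 - γ)) *
          ((∫ t in (0:ℝ)..x, t ^ γ * deriv v t ^ 2) * (1 - γ)⁻¹) := by ring
      _ = _ := by rw [this, one_mul]

lemma integral_rpow_le {r a b : ℝ} (hr : r < -1) (ha : 0 < a) (hab : a ≤ b) :
    ∫ t in a..b, t ^ r ≤ a ^ (r + 1) / (-(r + 1)) := by
  rw [integral_rpow (Or.inr ⟨hr.ne, fun h => by
    rw [uIcc_of_le hab] at h; exact absurd h.1 (not_le.2 ha)⟩)]
  have hb := Real.rpow_pos_of_pos (ha.trans_le hab) (r + 1)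
  rw [div_neg, ← neg_div, div_le_div_right_of_neg (by linarith)]
  linarith

/-- Integrated form of the equation `p' = -x^β Au - μ x^{γ-2} u` satisfied by the flux
`p = x^γ u'`. The two terms on the right are bounded separately by weighted Cauchy–Schwarz. -/
lemma flux_sub_sq_le {α β μ : ℝ} (hα2 : α < 2) (hαβ : α + β < 1)
    {u p : ℝ → ℝ} {M K : ℝ} (hK : 0 ≤ K) (huc : ContinuousOn u (Ioo 0 1))
    (hAc : ContinuousOn (Aop α β μ u) (Ioo 0 1))
    (hp : ∀ x ∈ Ioo (0:ℝ) 1,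
      HasDerivAt p (-(x ^ β * Aop α β μ u x) - μ * (x ^ (α + β - 2) * u x)) x)
    (hM : ∀ a b : ℝ, 0 < a → a < b → b < 1 → ∫ x in a..b, Aop α β μ u x ^ 2 * x ^ β ≤ M)
    (huK : ∀ x ∈ Ioo (0:ℝ) 1, u x ^ 2 ≤ K * x ^ (1 - (α + β))) :
    ∃ C : ℝ, 0 ≤ C ∧ ∀ a b : ℝ, 0 < a → a < b → b < 1 →
      (p b - p a) ^ 2 ≤ C * a ^ (α + β - 1) := by
  set γ := α + β with hγ
  have hγ1 : 0 < 1 - γ := by linarith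
  have hM0 : 0 ≤ M := by
    refine le_trans ?_ (hM (1/3) (1/2) (by norm_num) (by norm_num) (by norm_num))
    refine intervalIntegral.integral_nonneg (by norm_num) fun t ht => ?_
    have : 0 < t := lt_of_lt_of_le (by norm_num) ht.1
    positivity
  refine ⟨2 * (M / (1 - γ)) + 2 * (μ ^ 2 * (K * (2 / (1 - γ)) ^ 2)), by positivity, ?_⟩
  intro a b ha hab hb
  have hsub := Icc_sub ha hb
  have ii : ∀ {g : ℝ → ℝ}, ContinuousOn g (Ioo 0 1) → IntervalIntegrable g volume a b :=
    fun hg => ContinuousOn.intervalIntegrable (by rw [uIcc_of_le hab.le]; exact hg.mono hsub)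
  have hc1 : ContinuousOn (fun x => x ^ β * Aop α β μ u x) (Ioo 0 1) :=
    (continuousOn_rpow_Ioo β).mul hAc
  have hc2 : ContinuousOn (fun x => x ^ (γ - 2) * u x) (Ioo 0 1) :=
    (continuousOn_rpow_Ioo _).mul huc
  have hftc : p b - p a = -(∫ x in a..b, x ^ β * Aop α β μ u x)
      - μ * ∫ x in a..b, x ^ (γ - 2) * u x := by
    rw [← intervalIntegral.integral_const_mul, ← intervalIntegral.integral_neg,
      ← intervalIntegral.integral_sub (ii hc1.fun_neg) ((ii hc2).const_mul μ)]
    symm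
    refine intervalIntegral.integral_eq_sub_of_hasDerivAt (fun t ht => ?_) ?_
    · rw [uIcc_of_le hab.le] at ht
      exact hp t (hsub ht)
    · exact (ii hc1.fun_neg).sub ((ii hc2).const_mul μ)
  have h1 : (∫ x in a..b, x ^ β * Aop α β μ u x) ^ 2 ≤ M * (a ^ (γ - 1) / (1 - γ)) := by
    have key := sq_integral_le hab (hc1.mono hsub) ((continuousOn_rpow_Ioo (-β)).mono hsub)
      (fun t ht => Real.rpow_pos_of_pos (hsub ht).1 _)
    have e1 : ∫ x in a..b, x ^ (-β) * (x ^ β * Aop α β μ u x) ^ 2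
        = ∫ x in a..b, Aop α β μ u x ^ 2 * x ^ β := by
      refine intervalIntegral.integral_congr fun t ht => ?_
      rw [uIcc_of_le hab.le] at ht
      have := Real.rpow_pos_of_pos (hsub ht).1 β
      simp only [Real.rpow_neg (hsub ht).1.le]
      field_simp
    have e2 : ∫ x in a..b, (x ^ (-β))⁻¹ ≤ a ^ (γ - 1) / (1 - γ) := by
      -- `t^β ≤ t^{γ-2}` on `(0,1)` because `α ≤ 2`
      have hle : ∫ x in a..b, (x ^ (-β))⁻¹ ≤ ∫ x in a..b, x ^ (γ - 2) := by
        refine intervalIntegral.integral_mono_on hab.le (ii ?_) (ii (continuousOn_rpow_Ioo _)) ?_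
        · exact (continuousOn_rpow_Ioo (-β)).inv₀
            fun t ht => (Real.rpow_pos_of_pos ht.1 _).ne'
        · intro t ht
          rw [Real.rpow_neg (hsub ht).1.le, inv_inv]
          exact Real.rpow_le_rpow_of_exponent_ge (hsub ht).1 (hsub ht).2.le (by linarith)
      have := integral_rpow_le (r := γ - 2) (by linarith) ha hab.le
      rw [show γ - 2 + 1 = γ - 1 by ring, neg_sub] at this
      exact hle.trans this
    rw [e1] at key
    refine key.trans (mul_le_mul (hM a b ha hab hb) e2 ?_ hM0)
    exact intervalIntegral.integral_nonneg hab.le fun t ht =>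
      inv_nonneg.2 (Real.rpow_nonneg (hsub ht).1.le _)
  have h2 : (∫ x in a..b, x ^ (γ - 2) * u x) ^ 2 ≤ K * (2 / (1 - γ)) ^ 2 * a ^ (γ - 1) := by
    -- the weight `x^{(3-γ)/2}` makes both Cauchy–Schwarz factors multiples of `∫ x^{(γ-3)/2}`
    have key := sq_integral_le hab (hc2.mono hsub)
      ((continuousOn_rpow_Ioo ((3 - γ) / 2)).mono hsub)
      (fun t ht => Real.rpow_pos_of_pos (hsub ht).1 _)
    have hJ := integral_rpow_le (r := (γ - 3) / 2) (by linarith) ha hab.le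
    set J := ∫ t in a..b, t ^ ((γ - 3) / 2) with hJdef
    have hJ0 : 0 ≤ J := intervalIntegral.integral_nonneg hab.le fun t ht =>
      Real.rpow_nonneg (hsub ht).1.le _
    have e2 : ∫ x in a..b, (x ^ ((3 - γ) / 2))⁻¹ = J := by
      refine intervalIntegral.integral_congr fun t ht => ?_
      rw [uIcc_of_le hab.le] at ht
      rw [← Real.rpow_neg (hsub ht).1.le]
      congr 1; ring
    have e1 : ∫ x in a..b, x ^ ((3 - γ) / 2) * (x ^ (γ - 2) * u x) ^ 2 ≤ K * J := by
      rw [hJdef, ← intervalIntegral.integral_const_mul]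
      refine intervalIntegral.integral_mono_on hab.le
        (ii ((continuousOn_rpow_Ioo _).mul (hc2.pow 2)))
        ((ii (continuousOn_rpow_Ioo _)).const_mul _) fun t ht => ?_
      have ht0 := (hsub ht).1
      have hexp : t ^ ((3 - γ) / 2) * (t ^ (γ - 2)) ^ 2 * t ^ (1 - γ) = t ^ ((γ - 3) / 2) := by
        rw [← Real.rpow_natCast (t ^ (γ - 2)), ← Real.rpow_mul ht0.le, ← Real.rpow_add ht0,
          ← Real.rpow_add ht0]
        congr 1; push_cast; ring
      calc t ^ ((3 - γ) / 2) * (t ^ (γ - 2) * u t) ^ 2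
          = t ^ ((3 - γ) / 2) * (t ^ (γ - 2)) ^ 2 * u t ^ 2 := by ring
        _ ≤ t ^ ((3 - γ) / 2) * (t ^ (γ - 2)) ^ 2 * (K * t ^ (1 - γ)) :=
            mul_le_mul_of_nonneg_left (huK t (hsub ht)) (by positivity)
        _ = K * (t ^ ((3 - γ) / 2) * (t ^ (γ - 2)) ^ 2 * t ^ (1 - γ)) := by ring
        _ = _ := by rw [hexp]
    rw [e2] at key
    have hsq : (a ^ ((γ - 1) / 2)) ^ 2 = a ^ (γ - 1) := by
      rw [← Real.rpow_natCast, ← Real.rpow_mul ha.le]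
      congr 1; push_cast; ring
    have hJ' : J ≤ 2 / (1 - γ) * a ^ ((γ - 1) / 2) := by
      refine hJ.trans_eq ?_
      rw [show (γ - 3) / 2 + 1 = (γ - 1) / 2 by ring, show -((γ - 1) / 2) = (1 - γ) / 2 by ring]
      field_simp
    calc _ ≤ K * J * J := key.trans (mul_le_mul_of_nonneg_right e1 hJ0)
      _ = K * J ^ 2 := by ring
      _ ≤ K * (2 / (1 - γ) * a ^ ((γ - 1) / 2)) ^ 2 := by gcongr
      _ = _ := by rw [mul_pow, hsq]; ring
  rw [hftc]
  set I := ∫ x in a..b, x ^ β * Aop α β μ u x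
  set L := ∫ x in a..b, x ^ (γ - 2) * u x
  have h3 := mul_le_mul_of_nonneg_left h2 (sq_nonneg μ)
  calc (-I - μ * L) ^ 2 ≤ 2 * I ^ 2 + 2 * (μ ^ 2 * L ^ 2) := by nlinarith [sq_nonneg (I - μ * L)]
    _ ≤ 2 * (M * (a ^ (γ - 1) / (1 - γ)))
        + 2 * (μ ^ 2 * (K * (2 / (1 - γ)) ^ 2 * a ^ (γ - 1))) := by linarith
    _ = _ := by ring

theorem stmt_5 (α β μ : ℝ) (hα0 : 0 ≤ α) (hα2 : α < 2) (hαβ : α + β < 1)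
    (u v : ℝ → ℝ) (hu : ContDiffOn ℝ 2 u (Ioo 0 1)) (hv : ContDiffOn ℝ 1 v (Ioo 0 1))
    (hu0 : Tendsto u (nhdsWithin 0 (Ioi 0)) (nhds 0))
    (hu1 : Tendsto u (nhdsWithin 1 (Iio 1)) (nhds 0))
    (hv0 : Tendsto v (nhdsWithin 0 (Ioi 0)) (nhds 0))
    (hv1 : Tendsto v (nhdsWithin 1 (Iio 1)) (nhds 0))
    (huL2 : ∫⁻ x in Ioo (0:ℝ) 1, ENNReal.ofReal (u x ^ 2 * x ^ β) < ⊤)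
    (huH1 : ∫⁻ x in Ioo (0:ℝ) 1, ENNReal.ofReal (x ^ (α + β) * deriv u x ^ 2) < ⊤)
    (hvL2 : ∫⁻ x in Ioo (0:ℝ) 1, ENNReal.ofReal (v x ^ 2 * x ^ β) < ⊤)
    (hvH1 : ∫⁻ x in Ioo (0:ℝ) 1, ENNReal.ofReal (x ^ (α + β) * deriv v x ^ 2) < ⊤)
    (hAu : ∫⁻ x in Ioo (0:ℝ) 1, ENNReal.ofReal ((Aop α β μ u x) ^ 2 * x ^ β) < ⊤) :
    Tendsto (fun x => x ^ (α + β) * deriv u x * v x) (nhdsWithin 0 (Ioi 0)) (nhds 0) ∧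
    Tendsto (fun x => x ^ (α + β) * deriv u x * v x) (nhdsWithin 1 (Iio 1)) (nhds 0) := by
  have hγ1 : 0 < 1 - (α + β) := by linarith
  have hu1' : ContDiffOn ℝ 1 u (Ioo 0 1) := hu.of_le (by norm_num)
  have hdu : ContDiffOn ℝ 1 (deriv u) (Ioo 0 1) :=
    hu.deriv_of_isOpen isOpen_Ioo (by norm_num)
  have hdv : ContinuousOn (deriv v) (Ioo 0 1) :=
    hv.continuousOn_deriv_of_isOpen isOpen_Ioo le_rfl
  have hpow : ∀ r : ℝ, ContDiffOn ℝ 1 (fun x : ℝ => x ^ r) (Ioo 0 1) := fun r x hx =>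
    (Real.contDiffAt_rpow_const_of_ne hx.1.ne').contDiffWithinAt
  have hq : ContDiffOn ℝ 1 (fun y => y ^ α * deriv u y) (Ioo 0 1) := (hpow α).mul hdu
  have hAc : ContinuousOn (Aop α β μ u) (Ioo 0 1) := by
    unfold Aop
    refine ContinuousOn.sub (ContinuousOn.sub ?_ ?_) ?_
    · exact (hq.continuousOn_deriv_of_isOpen isOpen_Ioo le_rfl).neg
    · exact (continuousOn_const.mul (continuousOn_rpow_Ioo _)).mul hdu.continuousOn
    · exact (continuousOn_const.div (continuousOn_rpow_Ioo _)
        fun t ht => (Real.rpow_pos_of_pos ht.1 _).ne').mul hu.continuousOn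
  have hnn : ∀ (f : ℝ → ℝ), ∀ x ∈ Ioo (0:ℝ) 1, 0 ≤ x ^ (α + β) * f x ^ 2 := fun f x hx =>
    mul_nonneg (Real.rpow_nonneg hx.1.le _) (sq_nonneg _)
  have hEu : IntegrableOn (fun x => x ^ (α + β) * deriv u x ^ 2) (Ioo 0 1) :=
    integrableOn_of_lintegral ((continuousOn_rpow_Ioo _).mul (hdu.continuousOn.pow 2))
      (hnn _) huH1
  have hEv : IntegrableOn (fun x => x ^ (α + β) * deriv v x ^ 2) (Ioo 0 1) :=
    integrableOn_of_lintegral ((continuousOn_rpow_Ioo _).mul (hdv.pow 2)) (hnn _) hvH1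
  have hnA : ∀ x ∈ Ioo (0:ℝ) 1, 0 ≤ Aop α β μ u x ^ 2 * x ^ β := fun x hx =>
    mul_nonneg (sq_nonneg _) (Real.rpow_nonneg hx.1.le _)
  have hEA : IntegrableOn (fun x => Aop α β μ u x ^ 2 * x ^ β) (Ioo 0 1) :=
    integrableOn_of_lintegral ((hAc.pow 2).mul (continuousOn_rpow_Ioo _)) hnA hAu
  set p : ℝ → ℝ := fun x => x ^ (α + β) * deriv u x with hpdef
  have hp : ∀ x ∈ Ioo (0:ℝ) 1,
      HasDerivAt p (-(x ^ β * Aop α β μ u x) - μ * (x ^ (α + β - 2) * u x)) x := by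
    intro x hx
    have hqd := ((hq.differentiableOn one_ne_zero).differentiableAt
      (isOpen_Ioo.mem_nhds hx)).hasDerivAt
    have h := (Real.hasDerivAt_rpow_const (p := β) (Or.inl hx.1.ne')).mul hqd
    have heq : p =ᶠ[nhds x] (fun y => y ^ β) * (fun y => y ^ α * deriv u y) := by
      filter_upwards [isOpen_Ioo.mem_nhds hx] with y hy
      simp only [hpdef, Pi.mul_apply]
      rw [add_comm, Real.rpow_add hy.1, mul_assoc]
    refine (h.congr_of_eventuallyEq heq).congr_deriv ?_
    unfold Aop
    have e1 : x ^ β * x ^ (α - 1) = x ^ (β - 1) * x ^ α := by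
      rw [← Real.rpow_add hx.1, ← Real.rpow_add hx.1]; congr 1; ring
    have e2 : x ^ β * (x ^ (2 - α))⁻¹ = x ^ (α + β - 2) := by
      rw [← Real.rpow_neg hx.1.le, ← Real.rpow_add hx.1]; congr 1; ring
    rw [div_eq_mul_inv]
    linear_combination (-β * deriv u x) * e1 - μ * u x * e2
  obtain ⟨C, hC0, hC⟩ := flux_sub_sq_le hα2 hαβ
    (M := ∫ x in Ioo (0:ℝ) 1, Aop α β μ u x ^ 2 * x ^ β)
    (K := (∫ x in Ioo (0:ℝ) 1, x ^ (α + β) * deriv u x ^ 2) / (1 - (α + β)))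
    (div_nonneg (setIntegral_nonneg measurableSet_Ioo (hnn _)) hγ1.le)
    hu.continuousOn hAc hp
    (fun a b ha hab hb => integral_sub_le hEA hnA ha.le hab.le hb)
    (fun x hx => by
      refine (sq_le_energy hαβ hu1' hu0 hEu hx).trans ?_
      rw [div_mul_eq_mul_div, ← mul_div_assoc]
      have := Real.rpow_nonneg hx.1.le (1 - (α + β))
      gcongr
      exact integral_sub_le hEu (hnn _) le_rfl hx.1.le hx.2)
  have hsq : ∀ {l : Filter ℝ}, Tendsto (fun x => (p x * v x) ^ 2) l (nhds 0) →
      Tendsto (fun x => p x * v x) l (nhds 0) := fun h => by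
    have h' := (Real.continuous_sqrt.tendsto 0).comp h
    rw [Real.sqrt_zero] at h'
    exact (tendsto_zero_iff_abs_tendsto_zero _).2 (h'.congr fun x => Real.sqrt_sq_eq_abs _)
  constructor
  · refine hsq ?_
    -- near `0`: `p² = O(x^{γ-1})` whereas `x^{γ-1} v² → 0`
    have hlim : Tendsto (fun x => 2 * p (1/2) ^ 2 * v x ^ 2
        + 2 * C * (x ^ (α + β - 1) * v x ^ 2)) (nhdsWithin 0 (Ioi 0)) (nhds 0) := by
      simpa using ((hv0.pow 2).const_mul (2 * p (1/2) ^ 2)).add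
        ((tendsto_sq_mul hαβ hv hv0 hEv).const_mul (2 * C))
    refine tendsto_of_tendsto_of_tendsto_of_le_of_le' tendsto_const_nhds hlim
      (Eventually.of_forall fun _ => sq_nonneg _) ?_
    filter_upwards [Ioo_mem_nhdsGT (show (0:ℝ) < 1/2 by norm_num)] with x hx
    have h := hC x (1/2) hx.1 hx.2 (by norm_num)
    have h2 : p x ^ 2 ≤ 2 * p (1/2) ^ 2 + 2 * (C * x ^ (α + β - 1)) := by
      nlinarith [sq_nonneg (2 * p (1/2) - p x)]
    have h3 := mul_le_mul_of_nonneg_right h2 (sq_nonneg (v x))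
    rw [mul_pow]
    linarith
  · refine hsq ?_
    -- near `1`: `p` is bounded
    have hlim : Tendsto (fun x => (2 * p (1/2) ^ 2
        + 2 * (C * (1/2) ^ (α + β - 1))) * v x ^ 2) (nhdsWithin 1 (Iio 1)) (nhds 0) := by
      simpa using (hv1.pow 2).const_mul (2 * p (1/2) ^ 2 + 2 * (C * (1/2) ^ (α + β - 1)))
    refine tendsto_of_tendsto_of_tendsto_of_le_of_le' tendsto_const_nhds hlim
      (Eventually.of_forall fun _ => sq_nonneg _) ?_
    filter_upwards [Ioo_mem_nhdsLT (show (1/2:ℝ) < 1 by norm_num)] with x hx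
    have h := hC (1/2) x (by norm_num) hx.1 hx.2
    have h2 : p x ^ 2 ≤ 2 * p (1/2) ^ 2 + 2 * (C * (1/2) ^ (α + β - 1)) := by
      nlinarith [sq_nonneg (2 * p (1/2) - p x)]
    rw [mul_pow]
    exact mul_le_mul_of_nonneg_right h2 (sq_nonneg (v x))
end

section
/- Let 0 ≤ α < 2 and β ∈ ℝ with α + β > 1. Let u : (0,1) → ℝ be continuously differentiable with lim_{x→1⁻} u(x) = 0, ∫₀¹ u(x)² x^β dx < ∞ and ∫₀¹ x^{α+β} u'(x)² dx < ∞. Then lim_{x→0⁺} x^{(α+β−1)/2} u(x) = 0. -/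
open Set Filter MeasureTheory

/-!
Put `s = α + β - 1 > 0` and `g t = t ^ (s + 1) * (u' t) ^ 2`, which is integrable on `(0, 1)`.
For `0 < x < c < 1`, the fundamental theorem of calculus and Cauchy–Schwarz, in the form
`2 |u'| ≤ l⁻¹ g + l t ^ (-s - 1)`, give
`2 |u c - u x| ≤ l⁻¹ ∫ t in x..c, g t + l x ^ (-s) / s` for every `l > 0` (`two_mul_abs_sub_le`).
With `l = ε x ^ (s / 2)`, after multiplication by `x ^ (s / 2)`, the right-hand side becomes
`ε⁻¹ ∫ t in x..c, g t + ε / s`, which is at most `ε + ε / s` once `c` is so small that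
`∫ t in 0..c, g t ≤ ε ^ 2`. For this fixed `c`, the remaining term `x ^ (s / 2) * |u c|` tends to
`0` with `x`.
-/

/-- Weighted increment bound, with a free parameter `l` in place of the square root of
Cauchy–Schwarz. -/
lemma two_mul_abs_sub_le {s : ℝ} (hs : 0 < s) {u : ℝ → ℝ} (hu : ContDiffOn ℝ 1 u (Ioo 0 1))
    {x c l : ℝ} (hx : 0 < x) (hxc : x ≤ c) (hc : c < 1) (hl : 0 < l) :
    2 * |u c - u x| ≤
      l⁻¹ * (∫ t in x..c, t ^ (s + 1) * deriv u t ^ 2) + l * (x ^ (-s) / s) := by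
  have hsub : uIcc x c ⊆ Ioo 0 1 := by
    rw [uIcc_of_le hxc]
    exact fun t ht => ⟨hx.trans_le ht.1, ht.2.trans_lt hc⟩
  have hd : ContinuousOn (deriv u) (uIcc x c) :=
    (hu.continuousOn_deriv_of_isOpen isOpen_Ioo le_rfl).mono hsub
  have hpow (r : ℝ) : ContinuousOn (fun t : ℝ => t ^ r) (uIcc x c) := fun t ht =>
    (Real.continuousAt_rpow_const t r (Or.inl (hsub ht).1.ne')).continuousWithinAt
  have hftc : ∫ t in x..c, deriv u t = u c - u x :=
    intervalIntegral.integral_eq_sub_of_hasDerivAt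
      (fun t ht => ((hu.differentiableOn one_ne_zero).differentiableAt
        (isOpen_Ioo.mem_nhds (hsub ht))).hasDerivAt) hd.intervalIntegrable
  have hg : IntervalIntegrable (fun t => l⁻¹ * (t ^ (s + 1) * deriv u t ^ 2)) volume x c :=
    (((hpow _).mul (hd.pow 2)).intervalIntegrable).const_mul _
  have hp : IntervalIntegrable (fun t : ℝ => l * t ^ (-s - 1)) volume x c :=
    (hpow _).intervalIntegrable.const_mul _
  have hmono : ∫ t in x..c, 2 * |deriv u t| ≤
      ∫ t in x..c, (l⁻¹ * (t ^ (s + 1) * deriv u t ^ 2) + l * t ^ (-s - 1)) := by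
    refine intervalIntegral.integral_mono_on hxc (hd.abs.intervalIntegrable.const_mul 2)
      (hg.add hp) fun t ht => ?_
    have ht0 : 0 < t := hx.trans_le ht.1
    have ha : 0 < t ^ (s + 1) := Real.rpow_pos_of_pos ht0 _
    rw [show -s - 1 = -(s + 1) by ring, Real.rpow_neg ht0.le, ← sq_abs (deriv u t)]
    set a := t ^ (s + 1)
    set d := |deriv u t|
    have h : l⁻¹ * (a * d ^ 2) + l * a⁻¹ - 2 * d = (a * d - l) ^ 2 / (l * a) := by
      field_simp
      ring
    have : 0 ≤ (a * d - l) ^ 2 / (l * a) := by positivity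
    linarith
  rw [intervalIntegral.integral_add hg hp, intervalIntegral.integral_const_mul,
    intervalIntegral.integral_const_mul, intervalIntegral.integral_const_mul] at hmono
  have habs := intervalIntegral.abs_integral_le_integral_abs (f := deriv u) (μ := volume) hxc
  rw [hftc] at habs
  have hpint : ∫ t in x..c, t ^ (-s - 1) ≤ x ^ (-s) / s := by
    rw [integral_rpow (Or.inr ⟨by linarith, fun h => (hsub h).1.false⟩),
      show -s - 1 + 1 = -s by ring, div_neg, ← neg_div]
    have : 0 ≤ c ^ (-s) := Real.rpow_nonneg (hx.le.trans hxc) _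
    gcongr
    linarith
  have := mul_le_mul_of_nonneg_left hpint hl.le
  linarith

theorem stmt_6 (α β : ℝ) (hα0 : 0 ≤ α) (hα2 : α < 2) (hαβ : 1 < α + β)
    (u : ℝ → ℝ) (hu : ContDiffOn ℝ 1 u (Ioo 0 1))
    (h1 : Tendsto u (nhdsWithin 1 (Iio 1)) (nhds 0))
    (hL2 : ∫⁻ x in Ioo (0:ℝ) 1, ENNReal.ofReal (u x ^ 2 * x ^ β) < ⊤)
    (hH1 : ∫⁻ x in Ioo (0:ℝ) 1, ENNReal.ofReal (x ^ (α + β) * deriv u x ^ 2) < ⊤) :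
    Tendsto (fun x => x ^ ((α + β - 1) / 2) * u x) (nhdsWithin 0 (Ioi 0)) (nhds 0) := by
  obtain ⟨s, hs⟩ : ∃ s, s = α + β - 1 := ⟨_, rfl⟩
  rw [← hs]
  rw [show α + β = s + 1 by linarith] at hH1
  replace hs : 0 < s := by linarith
  have hgnn : ∀ t ∈ Ioo (0:ℝ) 1, 0 ≤ t ^ (s + 1) * deriv u t ^ 2 := fun t ht =>
    mul_nonneg (Real.rpow_nonneg ht.1.le _) (sq_nonneg _)
  have hgcont : ContinuousOn (fun t : ℝ => t ^ (s + 1) * deriv u t ^ 2) (Ioo 0 1) :=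
    (Real.continuous_rpow_const (by linarith)).continuousOn.mul
      ((hu.continuousOn_deriv_of_isOpen isOpen_Ioo le_rfl).pow 2)
  have hgi : IntegrableOn (fun t : ℝ => t ^ (s + 1) * deriv u t ^ 2) (Ioo 0 1) := by
    refine ⟨hgcont.aestronglyMeasurable measurableSet_Ioo, ?_⟩
    rw [hasFiniteIntegral_iff_ofReal (ae_restrict_of_forall_mem measurableSet_Ioo hgnn)]
    exact hH1
  have hgii : IntervalIntegrable (fun t : ℝ => t ^ (s + 1) * deriv u t ^ 2) volume 0 1 := by
    rwa [intervalIntegrable_iff_integrableOn_Ioo_of_le zero_le_one]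
  have hI : Tendsto (fun c => ∫ t in (0:ℝ)..c, t ^ (s + 1) * deriv u t ^ 2)
      (nhdsWithin 0 (Ioi 0)) (nhds 0) := by
    have h := intervalIntegral.continuousOn_primitive_interval (μ := volume) (a := (0:ℝ)) (b := 1)
      (f := fun t : ℝ => t ^ (s + 1) * deriv u t ^ 2)
      (by rwa [uIcc_of_le zero_le_one, integrableOn_Icc_iff_integrableOn_Ioo])
    have h0 := h 0 left_mem_uIcc
    rw [ContinuousWithinAt, intervalIntegral.integral_same, uIcc_of_le zero_le_one] at h0
    exact h0.mono_left ((nhdsWithin_Ioc_eq_nhdsGT (zero_lt_one' ℝ)).ge.trans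
      (nhdsWithin_mono _ Ioc_subset_Icc_self))
  rw [Metric.tendsto_nhds]
  intro η hη
  -- The final bound is `ε + (ε + ε / s) / 2`, which is less than `ε * (2 + 1 / s) = η`.
  obtain ⟨ε, hε, hεη⟩ : ∃ ε : ℝ, 0 < ε ∧ ε * (2 + 1 / s) = η :=
    ⟨η / (2 + 1 / s), by positivity, by field_simp⟩
  obtain ⟨c, hcI, hc0, hc1⟩ : ∃ c, (∫ t in (0:ℝ)..c, t ^ (s + 1) * deriv u t ^ 2) < ε ^ 2 ∧
      c ∈ Ioo (0:ℝ) 1 :=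
    ((hI.eventually_lt_const (by positivity : (0:ℝ) < ε ^ 2)).and
      (Ioo_mem_nhdsGT zero_lt_one)).exists
  have hlim : Tendsto (fun x : ℝ => x ^ (s / 2) * |u c|) (nhdsWithin 0 (Ioi 0)) (nhds 0) := by
    have h : Continuous fun x : ℝ => x ^ (s / 2) * |u c| :=
      (Real.continuous_rpow_const (by positivity)).mul continuous_const
    have h0 := h.tendsto 0
    simp only [Real.zero_rpow (by positivity : s / 2 ≠ 0), zero_mul] at h0
    exact h0.mono_left nhdsWithin_le_nhds
  filter_upwards [hlim.eventually_lt_const hε, Ioo_mem_nhdsGT hc0] with x hxu hx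
  have hx0 : 0 < x := hx.1
  have hp : 0 < x ^ (s / 2) := Real.rpow_pos_of_pos hx0 _
  have hkey := two_mul_abs_sub_le hs hu hx0 hx.2.le hc1 (mul_pos hε hp)
  have hJ : ∫ t in x..c, t ^ (s + 1) * deriv u t ^ 2 ≤ ε ^ 2 := by
    refine le_trans ?_ hcI.le
    refine intervalIntegral.integral_mono_interval hx0.le hx.2.le le_rfl ?_
      (hgii.mono_set ?_)
    · exact ae_restrict_of_forall_mem measurableSet_Ioc
        fun t ht => hgnn t ⟨ht.1, ht.2.trans_lt hc1⟩
    · rw [uIcc_of_le hc0.le, uIcc_of_le zero_le_one]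
      exact Icc_subset_Icc_right hc1.le
  have hxs : x ^ (-s) = (x ^ (s / 2))⁻¹ ^ 2 := by
    rw [← Real.rpow_neg hx0.le, ← Real.rpow_natCast, ← Real.rpow_mul hx0.le]
    congr 1
    push_cast
    ring
  rw [hxs] at hkey
  rw [Real.dist_eq, sub_zero, abs_mul, abs_of_pos hp]
  set p := x ^ (s / 2)
  have htri : |u x| ≤ |u c| + |u c - u x| := by
    have h := abs_sub (u c) (u c - u x)
    rwa [sub_sub_cancel] at h
  have hdiff : p * (2 * |u c - u x|) ≤ ε + ε / s := by
    calc p * (2 * |u c - u x|)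
        ≤ p * ((ε * p)⁻¹ * ε ^ 2 + ε * p * (p⁻¹ ^ 2 / s)) := by
          refine mul_le_mul_of_nonneg_left (hkey.trans ?_) hp.le
          gcongr
      _ = ε + ε / s := by field_simp
  have hη' : η = 2 * ε + ε / s := by rw [← hεη]; ring
  have hεs : 0 < ε / s := by positivity
  have := mul_le_mul_of_nonneg_left htri hp.le
  linarith
end

section
/- Let 0 ≤ α < 2 and β ∈ ℝ with α + β > 1. Let u : (0,1) → ℝ be continuously differentiable with lim_{x→1⁻} u(x) = 0, ∫₀¹ u(x)² x^β dx < ∞ and ∫₀¹ x^{α+β} u'(x)² dx < ∞. Then the generalized Hardy inequality holds: ((1−α−β)²/4) ∫₀¹ (u(x)²/x^{2−α−β}) dx ≤ ∫₀¹ x^{α+β} u'(x)² dx. -/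
/-!
Write `γ = α + β` and `c = (γ - 1) / 2 > 0`. Completing the square,
`0 ≤ x ^ γ (u' + c u / x)²`, and recognising the cross term as part of the derivative of
`x ^ (γ - 1) u²` gives the pointwise inequality
`c² x ^ (γ - 2) u² ≤ x ^ γ u'² + c (x ^ (γ - 1) u²)'`.
Integrated over `[a, b]` with `0 < a < b < 1`, the boundary term at `a` has a favourable sign and
is dropped, while the one at `b` tends to `0` as `b → 1` because `u(1⁻) = 0`. Exhausting `(0, 1)`
by such intervals yields the inequality.
-/

open Set Filter MeasureTheory

/-- Pointwise form of the Hardy inequality, where `v` and `w` stand for `u x` and `deriv u x`: the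
last summand is `(α + β - 1) / 2` times the derivative of `x ^ (α + β - 1) * u x ^ 2`. -/
lemma hardy_pointwise_s7 (α β x v w : ℝ) (hx : 0 < x) :
    (1 - α - β) ^ 2 / 4 * (v ^ 2 / x ^ (2 - α - β)) ≤ x ^ (α + β) * w ^ 2
      + (α + β - 1) / 2 *
        ((α + β - 1) * x ^ (α + β - 1 - 1) * v ^ 2 + x ^ (α + β - 1) * (2 * v * w)) := by
  have e1 : x ^ (2 - α - β) = x ^ 2 / x ^ (α + β) := by
    rw [show 2 - α - β = 2 - (α + β) by ring, Real.rpow_sub hx, Real.rpow_two]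
  have hy : 0 < x ^ (α + β) := Real.rpow_pos_of_pos hx _
  rw [e1, Real.rpow_sub_one hx.ne', Real.rpow_sub_one hx.ne']
  generalize x ^ (α + β) = y at *
  have h : 0 ≤ y * (w + (α + β - 1) / 2 * v / x) ^ 2 := by positivity
  refine le_of_sub_nonneg (h.trans_eq ?_)
  field_simp
  ring

/-- The Hardy inequality on a compact subinterval of `(0, 1)`, with a boundary term at the right
endpoint only. -/
lemma hardy_interval (α β : ℝ) (hαβ : 1 < α + β) (u : ℝ → ℝ) (hu : ContDiffOn ℝ 1 u (Ioo 0 1))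
    (a b : ℝ) (ha : 0 < a) (hab : a ≤ b) (hb : b < 1) :
    ENNReal.ofReal ((1 - α - β) ^ 2 / 4)
        * ∫⁻ x in Ioc a b, ENNReal.ofReal (u x ^ 2 / x ^ (2 - α - β))
      ≤ (∫⁻ x in Ioo (0:ℝ) 1, ENNReal.ofReal (x ^ (α + β) * deriv u x ^ 2))
        + ENNReal.ofReal ((α + β - 1) / 2 * (b ^ (α + β - 1) * u b ^ 2)) := by
  have hsub : Icc a b ⊆ Ioo 0 1 := fun x hx => ⟨ha.trans_le hx.1, hx.2.trans_lt hb⟩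
  have hcu : ContinuousOn u (Icc a b) := hu.continuousOn.mono hsub
  have hcd : ContinuousOn (deriv u) (Icc a b) :=
    (hu.continuousOn_deriv_of_isOpen isOpen_Ioo le_rfl).mono hsub
  have hcp (p : ℝ) : ContinuousOn (fun x : ℝ => x ^ p) (Icc a b) := fun x hx =>
    (Real.continuousAt_rpow_const x p (Or.inl (hsub hx).1.ne')).continuousWithinAt
  have hcF : ContinuousOn (fun x => u x ^ 2 / x ^ (2 - α - β)) (Icc a b) :=
    (hcu.pow 2).div (hcp _) fun x hx => (Real.rpow_pos_of_pos (hsub hx).1 _).ne'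
  have hcG : ContinuousOn (fun x => x ^ (α + β) * deriv u x ^ 2) (Icc a b) :=
    (hcp _).mul (hcd.pow 2)
  have hcP : ContinuousOn (fun x => (α + β - 1) * x ^ (α + β - 1 - 1) * u x ^ 2
      + x ^ (α + β - 1) * (2 * u x * deriv u x)) (Icc a b) :=
    ((continuousOn_const.mul (hcp _)).mul (hcu.pow 2)).add
      ((hcp _).mul ((continuousOn_const.mul hcu).mul hcd))
  have hiF := hcF.intervalIntegrable_of_Icc (μ := volume) hab
  have hiG := hcG.intervalIntegrable_of_Icc (μ := volume) hab
  have hiP := hcP.intervalIntegrable_of_Icc (μ := volume) hab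
  have hFTC := intervalIntegral.integral_eq_sub_of_hasDerivAt
    (f := fun x => x ^ (α + β - 1) * u x ^ 2) (a := a) (b := b) (fun x hx => by
      rw [uIcc_of_le hab] at hx
      have hd : HasDerivAt u (deriv u x) x :=
        ((hu.differentiableOn one_ne_zero).differentiableAt
          (isOpen_Ioo.mem_nhds (hsub hx))).hasDerivAt
      have := (Real.hasDerivAt_rpow_const (p := α + β - 1) (Or.inl (hsub hx).1.ne')).mul
        (hd.pow 2)
      refine this.congr_deriv ?_
      simp) hiP
  have hmono := intervalIntegral.integral_mono_on hab (hiF.const_mul ((1 - α - β) ^ 2 / 4))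
    (hiG.add (hiP.const_mul ((α + β - 1) / 2)))
    (fun x hx => hardy_pointwise_s7 α β x (u x) (deriv u x) (hsub hx).1)
  rw [intervalIntegral.integral_const_mul, intervalIntegral.integral_add hiG (hiP.const_mul _),
    intervalIntegral.integral_const_mul, hFTC] at hmono
  have hc : 0 < (α + β - 1) / 2 := by linarith
  have hA : 0 ≤ (α + β - 1) / 2 * (a ^ (α + β - 1) * u a ^ 2) := by positivity
  have hreal : (1 - α - β) ^ 2 / 4 * (∫ x in a..b, u x ^ 2 / x ^ (2 - α - β))
      ≤ (∫ x in a..b, x ^ (α + β) * deriv u x ^ 2)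
        + (α + β - 1) / 2 * (b ^ (α + β - 1) * u b ^ 2) := by
    linarith
  have hsub' : Ioc a b ⊆ Ioo 0 1 := Ioc_subset_Icc_self.trans hsub
  have hpos (p : ℝ) : ∀ x ∈ Ioc a b, 0 ≤ x ^ p := fun x hx =>
    Real.rpow_nonneg (hsub' hx).1.le _
  rw [intervalIntegral.integral_of_le hab, intervalIntegral.integral_of_le hab] at hreal
  have hF := ofReal_integral_eq_lintegral_ofReal hiF.1
    (ae_restrict_of_forall_mem measurableSet_Ioc fun x hx =>
      div_nonneg (sq_nonneg _) (hpos _ x hx))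
  have hG := ofReal_integral_eq_lintegral_ofReal hiG.1
    (ae_restrict_of_forall_mem measurableSet_Ioc fun x hx =>
      mul_nonneg (hpos _ x hx) (sq_nonneg _))
  rw [← hF, ← ENNReal.ofReal_mul (by positivity)]
  refine (ENNReal.ofReal_le_ofReal hreal).trans (ENNReal.ofReal_add_le.trans ?_)
  rw [hG]
  gcongr

theorem stmt_7 (α β : ℝ) (hα0 : 0 ≤ α) (hα2 : α < 2) (hαβ : 1 < α + β)
    (u : ℝ → ℝ) (hu : ContDiffOn ℝ 1 u (Ioo 0 1))
    (h1 : Tendsto u (nhdsWithin 1 (Iio 1)) (nhds 0))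
    (hL2 : ∫⁻ x in Ioo (0:ℝ) 1, ENNReal.ofReal (u x ^ 2 * x ^ β) < ⊤)
    (hH1 : ∫⁻ x in Ioo (0:ℝ) 1, ENNReal.ofReal (x ^ (α + β) * deriv u x ^ 2) < ⊤) :
    ENNReal.ofReal ((1 - α - β) ^ 2 / 4)
        * ∫⁻ x in Ioo (0:ℝ) 1, ENNReal.ofReal (u x ^ 2 / x ^ (2 - α - β))
      ≤ ∫⁻ x in Ioo (0:ℝ) 1, ENNReal.ofReal (x ^ (α + β) * deriv u x ^ 2) := by
  -- Exhaust `(0, 1)` by the intervals `(1 - b, b]` as `b → 1⁻`.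
  have hb : Tendsto (fun b : ℝ => b) (nhdsWithin 1 (Iio 1)) (nhds 1) :=
    tendsto_id.mono_left nhdsWithin_le_nhds
  have ha : Tendsto (fun b : ℝ => 1 - b) (nhdsWithin 1 (Iio 1)) (nhds 0) := by
    simpa using hb.const_sub 1
  have hcov : AECover (volume.restrict (Ioo (0:ℝ) 1)) (nhdsWithin 1 (Iio 1))
      (fun b : ℝ => Ioc (1 - b) b) := aecover_Ioo_of_Ioc ha hb
  have hm : AEMeasurable (fun x => ENNReal.ofReal (u x ^ 2 / x ^ (2 - α - β)))
      (volume.restrict (Ioo (0:ℝ) 1)) :=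
    (((hu.continuousOn.aemeasurable measurableSet_Ioo).pow_const 2).div
      (measurable_id.pow_const _).aemeasurable).ennreal_ofReal
  have hL := ENNReal.Tendsto.const_mul (a := ENNReal.ofReal ((1 - α - β) ^ 2 / 4))
    (hcov.lintegral_tendsto_of_countably_generated hm) (Or.inr ENNReal.ofReal_ne_top)
  have hB : Tendsto (fun b : ℝ => ENNReal.ofReal ((α + β - 1) / 2 * (b ^ (α + β - 1) * u b ^ 2)))
      (nhdsWithin 1 (Iio 1)) (nhds 0) := by
    have := ENNReal.tendsto_ofReal
      (((hb.rpow_const (p := α + β - 1) (Or.inl one_ne_zero)).mul (h1.pow 2)).const_mul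
        ((α + β - 1) / 2))
    simpa using this
  have hR := hB.const_add
    (∫⁻ x in Ioo (0:ℝ) 1, ENNReal.ofReal (x ^ (α + β) * deriv u x ^ 2))
  rw [add_zero] at hR
  refine le_of_tendsto_of_tendsto hL hR ?_
  filter_upwards [Ioo_mem_nhdsLT (show (1 / 2 : ℝ) < 1 by norm_num)] with b hb'
  have hsub : Ioc (1 - b) b ⊆ Ioo 0 1 := fun x hx =>
    ⟨by linarith [hx.1, hb'.2], hx.2.trans_lt hb'.2⟩
  rw [Measure.restrict_restrict_of_subset hsub]
  exact hardy_interval α β hαβ u hu (1 - b) b (by linarith [hb'.2]) (by linarith [hb'.1]) hb'.2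
end

section
/- Let ν ≥ 0. There exists a constant C > 0 such that for every k ≥ 1, |√(j_{ν,k}) · |J_ν'(j_{ν,k})| − √(2/π)| ≤ C / j_{ν,k}; in other words, √(j_{ν,k}) |J_ν'(j_{ν,k})| = √(2/π) + O(1/j_{ν,k}) as k → ∞. -/
namespace BesselAux

open Real Set Filter Topology MeasureTheory

/-! ### The power series and Bessel's equation -/

/-- The coefficient `(-1)^m / (m! Γ(m + ν + 1))` of the Bessel series. -/
noncomputable def coef (ν : ℝ) (m : ℕ) : ℝ :=
  (-1 : ℝ) ^ m / ((m.factorial : ℝ) * Real.Gamma ((m : ℝ) + ν + 1))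

/-- The entire function `z ↦ ∑ (-1)^m z^m / (m! Γ(m + ν + 1))`, restricted to the real line, so that
`J_ν(x) = (x/2)^ν * entire ν (x²/4)` for `x > 0`. -/
noncomputable def entire (ν : ℝ) (z : ℝ) : ℝ := ∑' m : ℕ, coef ν m * z ^ m

/-- Follows from `Γ(x + 1) = x Γ(x)`, as `Γ` itself need not be monotone on `[1, 2]`. -/
lemma gamma_le (ν : ℝ) (hν : 0 ≤ ν) (m : ℕ) : Gamma (ν + 1) ≤ Gamma (m + ν + 1) := by
  induction m with
  | zero => simp
  | succ n ih =>
    have h : (0 : ℝ) < n + ν + 1 := by positivity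
    have h2 : Gamma ((n + ν + 1) + 1) = (n + ν + 1) * Gamma (n + ν + 1) :=
      Gamma_add_one h.ne'
    have h3 : ((n + 1 : ℕ) : ℝ) + ν + 1 = (n + ν + 1) + 1 := by push_cast; ring
    rw [h3, h2]
    have h4 := Gamma_pos_of_pos h
    have : (0 : ℝ) ≤ n := n.cast_nonneg
    nlinarith

lemma abs_coef_le (ν : ℝ) (hν : 0 ≤ ν) (m : ℕ) :
    |coef ν m| ≤ (Gamma (ν + 1))⁻¹ * ((m.factorial : ℝ))⁻¹ := by
  have h0 : 0 < Gamma (ν + 1) := Gamma_pos_of_pos (by linarith)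
  have h1 := gamma_le ν hν m
  have h2 : (0 : ℝ) < m.factorial := by positivity
  rw [coef, abs_div, abs_pow, abs_neg, abs_one, one_pow, abs_of_pos (by positivity), one_div,
    mul_inv, mul_comm]
  gcongr

lemma coef_succ (ν : ℝ) (m : ℕ) : coef ν (m + 1) * (m + 1) = -coef (ν + 1) m := by
  unfold coef
  have h : ((m + 1 : ℕ) : ℝ) + ν + 1 = m + (ν + 1) + 1 := by push_cast; ring
  have h2 : (m.factorial : ℝ) ≠ 0 := by positivity
  have h3 : (m + 1 : ℝ) ≠ 0 := by positivity
  rw [h, Nat.factorial_succ]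
  push_cast
  by_cases h4 : Gamma (m + (ν + 1) + 1) = 0
  · simp [h4]
  field_simp
  ring

lemma summable_entire (ν : ℝ) (hν : 0 ≤ ν) (z : ℝ) : Summable fun m ↦ coef ν m * z ^ m := by
  have h := (Real.summable_pow_div_factorial |z|).mul_left (Gamma (ν + 1))⁻¹
  refine Summable.of_norm_bounded h fun m ↦ ?_
  rw [norm_mul, norm_pow, Real.norm_eq_abs, Real.norm_eq_abs]
  calc _ ≤ (Gamma (ν + 1))⁻¹ * ((m.factorial : ℝ))⁻¹ * |z| ^ m := by
        gcongr; exact abs_coef_le ν hν m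
    _ = _ := by ring

lemma hasDerivAt_entire (ν : ℝ) (hν : 0 ≤ ν) (z : ℝ) :
    HasDerivAt (entire ν) (-entire (ν + 1) z) z := by
  -- Termwise differentiation on the ball of radius `R` around `0`, with a majorant uniform there.
  set R : ℝ := |z| + 1
  have hR : 0 ≤ R := by positivity
  have hsum : Summable fun m : ℕ ↦ (Gamma (ν + 1))⁻¹ * ((m : ℝ) * R ^ (m - 1) / m.factorial) := by
    refine Summable.mul_left _ ?_
    rw [← summable_nat_add_iff 1]
    refine (Real.summable_pow_div_factorial R).congr fun m ↦ ?_
    have h2 : (m.factorial : ℝ) ≠ 0 := by positivity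
    have h3 : (m + 1 : ℝ) ≠ 0 := by positivity
    rw [Nat.factorial_succ]
    push_cast
    field_simp
  have hz : z ∈ Metric.ball (0 : ℝ) R := by simp [R]
  have key := hasDerivAt_tsum_of_isPreconnected (𝕜 := ℝ)
    (g := fun m z ↦ coef ν m * z ^ m) (g' := fun m z ↦ coef ν m * (m * z ^ (m - 1)))
    (t := Metric.ball (0 : ℝ) R) hsum Metric.isOpen_ball
    (convex_ball _ _).isPreconnected
    (fun m y _ ↦ (hasDerivAt_pow m y).const_mul _)
    (fun m y hy ↦ ?_) hz (summable_entire ν hν z) hz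
  · refine key.congr_deriv ?_
    have hs : Summable fun m : ℕ ↦ coef ν m * (m * z ^ (m - 1)) := by
      rw [← summable_nat_add_iff 1]
      refine (summable_entire (ν + 1) (by linarith) z).neg.congr fun m ↦ ?_
      have := coef_succ ν m
      push_cast
      linear_combination (-z ^ m) * this
    rw [hs.tsum_eq_zero_add, entire, ← tsum_neg]
    simp only [Nat.cast_zero, zero_mul, mul_zero, zero_add]
    refine tsum_congr fun m ↦ ?_
    have := coef_succ ν m
    push_cast
    linear_combination (z ^ m) * this
  · have hy' : |y| ≤ R := by
      have := Metric.mem_ball.1 hy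
      rw [dist_zero_right] at this
      exact this.le
    rw [norm_mul, norm_mul, norm_pow, Real.norm_eq_abs, Real.norm_eq_abs, Real.norm_eq_abs,
      abs_of_nonneg (a := (m : ℝ)) (Nat.cast_nonneg m)]
    calc _ ≤ (Gamma (ν + 1))⁻¹ * ((m.factorial : ℝ))⁻¹ * (m * R ^ (m - 1)) := by
          gcongr; exact abs_coef_le ν hν m
      _ = _ := by ring

/-- The three-term recurrence `J_ν(x) + J_{ν+2}(x) = (2(ν+1)/x) J_{ν+1}(x)` in terms of `entire`. -/
lemma entire_rec (ν : ℝ) (hν : 0 ≤ ν) (z : ℝ) :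
    entire ν z = (ν + 1) * entire (ν + 1) z - z * entire (ν + 2) z := by
  have s0 := summable_entire ν hν z
  have s1 := (summable_entire (ν + 1) (by linarith) z).mul_left (ν + 1)
  have s2 := (summable_entire (ν + 2) (by linarith) z).mul_left z
  unfold entire
  rw [← tsum_mul_left, ← tsum_mul_left, s0.tsum_eq_zero_add, s1.tsum_eq_zero_add,
    add_sub_assoc, ← ((summable_nat_add_iff 1).2 s1).tsum_sub s2]
  have e (n : ℕ) : coef ν n = (n + ν + 1) * coef (ν + 1) n := by
    unfold coef
    have h : (0 : ℝ) < n + ν + 1 := by positivity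
    have h1 : (n : ℝ) + (ν + 1) + 1 = (n + ν + 1) + 1 := by ring
    have h2 : (n.factorial : ℝ) ≠ 0 := by positivity
    have h4 := (Gamma_pos_of_pos h).ne'
    rw [h1, Gamma_add_one h.ne']
    field_simp
  congr 1
  · rw [e 0]; simp
  · refine tsum_congr fun m ↦ ?_
    have h2 := coef_succ (ν + 1) m
    rw [show ν + 1 + 1 = ν + 2 by ring] at h2
    rw [e (m + 1)]
    push_cast
    linear_combination z ^ (m + 1) * h2

/-- The normalised Bessel function `u x = √x J_ν(x)` for `x > 0`, with the powers of `x` collected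
(see `besselJ_eq`). For `ν ≥ 0` the value at `x = 0` is `0`. -/
noncomputable def u (ν x : ℝ) : ℝ := 2 ^ (-ν) * x ^ (ν + 1 / 2) * entire ν (x ^ 2 / 4)

/-- The derivative of `u ν` on `x > 0` (see `hasDerivAt_u`). -/
noncomputable def v (ν x : ℝ) : ℝ :=
  2 ^ (-ν) * ((ν + 1 / 2) * x ^ (ν - 1 / 2) * entire ν (x ^ 2 / 4)
    - x ^ (ν + 3 / 2) / 2 * entire (ν + 1) (x ^ 2 / 4))

lemma besselJ_eq (ν x : ℝ) (hx : 0 < x) : besselJ ν x = u ν x * x ^ (-(1 / 2 : ℝ)) := by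
  have h : u ν x * x ^ (-(1 / 2 : ℝ)) = (x / 2) ^ ν * entire ν (x ^ 2 / 4) := by
    rw [u, div_rpow hx.le (by norm_num), rpow_add hx, rpow_neg hx.le, rpow_neg (by norm_num)]
    have : x ^ (1 / 2 : ℝ) ≠ 0 := by positivity
    field_simp
  rw [h, besselJ, entire, ← tsum_mul_left]
  refine tsum_congr fun m ↦ ?_
  have h2 : (0 : ℝ) < x / 2 := by positivity
  rw [rpow_add h2, rpow_mul h2.le, rpow_natCast, coef, rpow_two]
  rw [show (x / 2) ^ 2 = x ^ 2 / 4 by ring]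
  ring

lemma hasDerivAt_entire_sq (ν : ℝ) (hν : 0 ≤ ν) (x : ℝ) :
    HasDerivAt (fun x ↦ entire ν (x ^ 2 / 4)) (-entire (ν + 1) (x ^ 2 / 4) * (x / 2)) x := by
  have h : HasDerivAt (fun x : ℝ ↦ x ^ 2 / 4) (x / 2) x := by
    refine ((hasDerivAt_pow 2 x).div_const 4).congr_deriv ?_
    norm_num
    ring
  exact (hasDerivAt_entire ν hν (x ^ 2 / 4)).comp x h

lemma hasDerivAt_u (ν : ℝ) (hν : 0 ≤ ν) (x : ℝ) (hx : 0 < x) :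
    HasDerivAt (u ν) (v ν x) x := by
  have h1 := ((hasDerivAt_rpow_const (x := x) (p := ν + 1 / 2) (Or.inl hx.ne')).const_mul
    ((2 : ℝ) ^ (-ν))).mul (hasDerivAt_entire_sq ν hν x)
  refine h1.congr_deriv ?_
  rw [v, show ν + 1 / 2 - 1 = ν - 1 / 2 by ring, show ν + 3 / 2 = (ν + 1 / 2) + 1 by ring,
    rpow_add_one hx.ne']
  ring

/-- The normal form `u'' = ((ν² - 1/4) / x² - 1) u` of Bessel's equation. -/
lemma hasDerivAt_v (ν : ℝ) (hν : 0 ≤ ν) (x : ℝ) (hx : 0 < x) :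
    HasDerivAt (v ν) (((ν ^ 2 - 1 / 4) / x ^ 2 - 1) * u ν x) x := by
  have h1 := (((hasDerivAt_rpow_const (x := x) (p := ν - 1 / 2) (Or.inl hx.ne')).const_mul
    (ν + 1 / 2)).mul (hasDerivAt_entire_sq ν hν x))
  have h2 := (((hasDerivAt_rpow_const (x := x) (p := ν + 3 / 2) (Or.inl hx.ne')).div_const
    2).mul (hasDerivAt_entire_sq (ν + 1) (by linarith) x))
  refine ((h1.sub h2).const_mul ((2 : ℝ) ^ (-ν))).congr_deriv ?_
  have e := entire_rec ν hν (x ^ 2 / 4)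
  rw [show ν + 1 + 1 = ν + 2 by ring]
  have p1 : x ^ (ν - 1 / 2 - 1) = x ^ ν * (x ^ (1 / 2 : ℝ)) / x ^ 2 := by
    rw [← rpow_add hx, ← rpow_two, ← rpow_sub hx]; congr 1; ring
  have p2 : x ^ (ν - 1 / 2) = x ^ ν * (x ^ (1 / 2 : ℝ)) / x := by
    rw [← rpow_add hx, ← rpow_sub_one hx.ne']; congr 1; ring
  have p3 : x ^ (ν + 3 / 2 - 1) = x ^ ν * (x ^ (1 / 2 : ℝ)) := by
    rw [← rpow_add hx]; congr 1; ring
  have p4 : x ^ (ν + 3 / 2) = x ^ ν * (x ^ (1 / 2 : ℝ)) * x := by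
    rw [← rpow_add hx, ← rpow_add_one hx.ne']; congr 1; ring
  rw [u, p1, p2, p3, p4, rpow_add hx]
  generalize x ^ ν * x ^ (1 / 2 : ℝ) = T
  generalize entire (ν + 2) (x ^ 2 / 4) = g2 at *
  generalize entire (ν + 1) (x ^ 2 / 4) = g1 at *
  generalize entire (ν) (x ^ 2 / 4) = g0 at *
  field_simp
  linear_combination (16 : ℝ) * x^2 * T * e

/-! ### Convergence of the phase -/

/-- Solutions of `u'' = (c / x² - 1) u` are bounded at infinity: the derivative of the energy
`u² + u'²` is at most `|c| / x²` times the energy, so the energy times `exp (|c| / x)` is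
antitone. -/
lemma bounded_of_ode {u v : ℝ → ℝ} {c : ℝ} (hu : ∀ x > 0, HasDerivAt u (v x) x)
    (hv : ∀ x > 0, HasDerivAt v ((c / x ^ 2 - 1) * u x) x) {a : ℝ} (ha : 0 < a) :
    ∃ K, ∀ x ≥ a, |u x| ≤ K := by
  set F : ℝ → ℝ := fun x ↦ (u x ^ 2 + v x ^ 2) * exp (|c| / x) with hF
  have hd : ∀ x > 0, HasDerivAt F
      ((2 * (c / x ^ 2) * (u x * v x) - |c| / x ^ 2 * (u x ^ 2 + v x ^ 2)) * exp (|c| / x)) x := by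
    intro x hx
    have h1 : HasDerivAt (fun x : ℝ ↦ |c| / x) (-|c| / x ^ 2) x := by
      refine ((hasDerivAt_inv hx.ne').const_mul |c|).congr_deriv ?_
      field_simp
    refine ((((hu x hx).pow 2).add ((hv x hx).pow 2)).mul h1.exp).congr_deriv ?_
    simp only [Pi.add_apply, Pi.pow_apply]
    push_cast
    ring
  have hanti : AntitoneOn F (Ici a) := by
    refine antitoneOn_of_deriv_nonpos (convex_Ici a)
      (fun x hx ↦ (hd x (ha.trans_le hx)).continuousAt.continuousWithinAt)
      (fun x hx ↦ ?_) (fun x hx ↦ ?_)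
    · rw [interior_Ici] at hx
      exact (hd x (ha.trans hx)).differentiableAt.differentiableWithinAt
    · rw [interior_Ici] at hx
      have hx0 : 0 < x := ha.trans hx
      rw [(hd x hx0).deriv]
      refine mul_nonpos_of_nonpos_of_nonneg ?_ (exp_pos _).le
      have h1 : 2 * (c / x ^ 2) * (u x * v x) ≤ |c| / x ^ 2 * (2 * |u x * v x|) := by
        calc _ ≤ |2 * (c / x ^ 2) * (u x * v x)| := le_abs_self _
          _ = _ := by
            rw [abs_mul, abs_mul, abs_div, abs_of_pos (show (0 : ℝ) < x ^ 2 by positivity)]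
            norm_num; ring
      have h2 : 2 * |u x * v x| ≤ u x ^ 2 + v x ^ 2 := by
        rw [abs_mul, ← sq_abs (u x), ← sq_abs (v x)]
        nlinarith [sq_nonneg (|u x| - |v x|)]
      have h3 : 0 ≤ |c| / x ^ 2 := by positivity
      nlinarith [mul_le_mul_of_nonneg_left h2 h3]
  refine ⟨√(F a), fun x hx ↦ abs_le_sqrt ?_⟩
  have h1 := hanti (mem_Ici.2 le_rfl) (mem_Ici.2 hx) hx
  have h2 : 1 ≤ exp (|c| / x) := one_le_exp (div_nonneg (abs_nonneg _) (ha.trans_le hx).le)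
  have h3 : u x ^ 2 + v x ^ 2 ≤ F x := by
    rw [hF]
    exact le_mul_of_one_le_right (by positivity) h2
  nlinarith [sq_nonneg (v x)]

/-- The function `e^{-ix} (v x + i u x)`; it is constant when `v = u'` and `u'' = -u`. -/
noncomputable def phase (u v : ℝ → ℝ) (x : ℝ) : ℂ :=
  Complex.exp (-(x * Complex.I)) * (v x + u x * Complex.I)

/-- Solutions of `u'' = (c / x² - 1) u` are asymptotically free: `e^{-ix} (u' + i u)` has derivative
`e^{-ix} c u / x²`, so it converges with error `O(1/x)`. -/
lemma phase_limit {u v : ℝ → ℝ} {c : ℝ} (hu : ∀ x > 0, HasDerivAt u (v x) x)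
    (hv : ∀ x > 0, HasDerivAt v ((c / x ^ 2 - 1) * u x) x) :
    ∃ W : ℂ, ∀ a > 0, ∃ K > 0, ∀ x ≥ a, ‖phase u v x - W‖ ≤ K / x := by
  set w' : ℝ → ℂ := fun x ↦ Complex.exp (-(x * Complex.I)) * ((c / x ^ 2 * u x : ℝ) : ℂ)
  have hd : ∀ x > 0, HasDerivAt (phase u v) (w' x) x := by
    intro x hx
    have h1 : HasDerivAt (fun x : ℝ ↦ Complex.exp (-(x * Complex.I)))
        (Complex.exp (-(x * Complex.I)) * (-(1 * Complex.I))) x :=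
      (((hasDerivAt_id x).ofReal_comp.mul_const Complex.I).neg).cexp
    have h2 := ((hv x hx).ofReal_comp).add (((hu x hx).ofReal_comp).mul_const Complex.I)
    refine (h1.mul h2).congr_deriv ?_
    simp only [w', Pi.add_apply]
    push_cast
    linear_combination (-Complex.exp (-(x * Complex.I)) * u x) * Complex.I_sq
  have hcont : ContinuousOn w' (Ioi 0) := by
    have : ContinuousOn u (Ioi 0) := fun x hx ↦ (hu x hx).continuousAt.continuousWithinAt
    refine ContinuousOn.mul (by fun_prop) (Complex.continuous_ofReal.comp_continuousOn ?_)
    exact (continuousOn_const.div (by fun_prop) (fun x hx ↦ pow_ne_zero 2 (ne_of_gt hx))).mul this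
  have hbd : ∀ a > 0, ∃ K > 0, ∀ x ≥ a, ‖w' x‖ ≤ K * x ^ (-2 : ℝ) := by
    intro a ha
    obtain ⟨K, hK⟩ := bounded_of_ode hu hv ha
    refine ⟨|c| * |K| + 1, by positivity, fun x hx ↦ ?_⟩
    have hx0 : 0 < x := ha.trans_le hx
    have e : ‖Complex.exp (-(x * Complex.I))‖ = 1 := by
      rw [show -((x : ℂ) * Complex.I) = ((-x : ℝ) : ℂ) * Complex.I by push_cast; ring,
        Complex.norm_exp_ofReal_mul_I]
    have hu' : |u x| ≤ |K| := (hK x hx).trans (le_abs_self K)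
    rw [norm_mul, e, one_mul, Complex.norm_real, Real.norm_eq_abs, abs_mul, abs_div,
      abs_of_pos (show (0 : ℝ) < x ^ 2 by positivity), rpow_neg hx0.le, rpow_two, div_eq_mul_inv,
      mul_right_comm]
    gcongr
    nlinarith [abs_nonneg c]
  have hint : ∀ a > 0, IntegrableOn w' (Ioi a) := by
    intro a ha
    obtain ⟨K, -, hK⟩ := hbd a ha
    refine Integrable.mono' ((integrableOn_Ioi_rpow_of_lt (by norm_num : (-2 : ℝ) < -1) ha).const_mul
      K) ?_ ?_
    · exact (hcont.mono (Ioi_subset_Ioi ha.le)).aestronglyMeasurable measurableSet_Ioi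
    · exact (ae_restrict_iff' measurableSet_Ioi).2 (ae_of_all _ fun x hx ↦ hK x (le_of_lt hx))
  have hlim := tendsto_limUnder_of_hasDerivAt_of_integrableOn_Ioi (a := 1)
    (fun x hx ↦ hd x (one_pos.trans hx)) (hint 1 one_pos)
  refine ⟨limUnder atTop (phase u v), fun a ha ↦ ?_⟩
  obtain ⟨K, hK0, hK⟩ := hbd a ha
  refine ⟨K, hK0, fun x hx ↦ ?_⟩
  have hx0 : 0 < x := ha.trans_le hx
  have h1 := integral_Ioi_of_hasDerivAt_of_tendsto' (fun y hy ↦ hd y (hx0.trans_le hy))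
    (hint x hx0) hlim
  rw [norm_sub_rev, ← h1]
  have h2 := norm_integral_le_of_norm_le
    ((integrableOn_Ioi_rpow_of_lt (by norm_num : (-2 : ℝ) < -1) hx0).const_mul K)
    ((ae_restrict_iff' measurableSet_Ioi).2
      (ae_of_all _ fun y (hy : x < y) ↦ hK y (hx.trans hy.le)))
  refine h2.trans (le_of_eq ?_)
  rw [integral_const_mul, integral_Ioi_rpow_of_lt (by norm_num) hx0]
  norm_num
  rw [rpow_neg_one]; rfl

/-! ### The Laplace transform -/

/-- The binomial series for `(1 - x)^{-a}`, with Gamma quotients as coefficients. -/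
lemma hasSum_binomial {a x : ℝ} (ha : 0 < a) (hx : |x| < 1) :
    HasSum (fun m : ℕ ↦ Gamma (m + a) / m.factorial * x ^ m) (Gamma a * (1 - x) ^ (-a)) := by
  have h := (Real.one_div_one_sub_rpow_hasFPowerSeriesOnBall_zero a).hasSum (y := x)
    (by simpa [enorm_eq_nnnorm, ← NNReal.coe_lt_coe] using hx)
  have h1 : (1 : ℝ) - x > 0 := by linarith [(abs_lt.1 hx).2]
  have h2 := h.mul_left (Gamma a)
  rw [zero_add, one_div, ← rpow_neg h1.le] at h2
  refine (congrArg (fun f : ℕ → ℝ ↦ HasSum f _) (funext fun m ↦ ?_)).mpr h2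
  have hch : Gamma (m + a) = Gamma a * (m.factorial * Ring.choose (a + m - 1) m) := by
    have e1 : (m.factorial : ℝ) * Ring.choose (a + m - 1) m = (ascPochhammer ℝ m).eval a := by
      rw [Ring.choose, show a + m - 1 - m + 1 = a by ring, ← nsmul_eq_mul,
        Ring.factorial_nsmul_multichoose_eq_ascPochhammer,
        Polynomial.ascPochhammer_smeval_eq_eval]
    rw [e1]
    clear e1
    induction m with
    | zero => simp
    | succ n ih =>
      have hn : (n : ℝ) + a ≠ 0 := by positivity
      rw [ascPochhammer_succ_eval, ← mul_assoc, ← ih, show ((n + 1 : ℕ) : ℝ) + a = n + a + 1 by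
        push_cast; ring, Gamma_add_one hn]
      ring
  have hm : (m.factorial : ℝ) ≠ 0 := by positivity
  rw [hch]
  simp only [FormalMultilinearSeries.ofScalars_apply_eq, smul_eq_mul]
  field_simp

lemma integrableOn_rpow_exp {b r : ℝ} (hb : -1 < b) (hr : 0 < r) :
    IntegrableOn (fun t : ℝ ↦ t ^ b * exp (-(r * t))) (Ioi 0) := by
  simpa using integrableOn_rpow_mul_exp_neg_mul_rpow hb one_pos hr

lemma integral_rpow_exp {b r : ℝ} (hb : -1 < b) (hr : 0 < r) :
    ∫ t in Ioi (0 : ℝ), t ^ b * exp (-(r * t)) = Gamma (b + 1) * r ^ (-(b + 1)) := by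
  have := Real.integral_rpow_mul_exp_neg_mul_Ioi (a := b + 1) (by linarith) hr
  rw [add_sub_cancel_right] at this
  rw [this, one_div, inv_rpow hr.le, rpow_neg hr.le, mul_comm]

/-- The Laplace transform of `t^ν J_ν(t)` for real `s > 1`, by integrating the series term by term;
for these `s` the resulting binomial series in `-1/s²` converges absolutely. -/
lemma laplace_real (ν : ℝ) (hν : 0 ≤ ν) {s : ℝ} (hs : 1 < s) :
    ∫ t in Ioi (0 : ℝ), exp (-(s * t)) * (t ^ (ν - 1 / 2) * u ν t)
      = 2 ^ ν / √π * Gamma (ν + 1 / 2) * (1 + s ^ 2) ^ (-(ν + 1 / 2)) := by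
  have hs0 : 0 < s := by linarith
  set F : ℕ → ℝ → ℝ := fun m t ↦
    (2 ^ (-ν) * coef ν m * (1 / 4) ^ m) * (t ^ (2 * m + 2 * ν) * exp (-(s * t))) with hF
  have hb (m : ℕ) : -1 < 2 * (m : ℝ) + 2 * ν := by
    have : (0 : ℝ) ≤ m := m.cast_nonneg
    linarith
  have hint (m : ℕ) : Integrable (F m) (volume.restrict (Ioi 0)) :=
    (integrableOn_rpow_exp (hb m) hs0).const_mul _
  -- Legendre's duplication formula at `m + ν + 1/2` cancels the factor `Γ(m + ν + 1)`.
  have hdup (m : ℕ) : 2 ^ (-ν) * (1 / ((m.factorial : ℝ) * Gamma ((m : ℝ) + ν + 1))) * (1 / 4) ^ m *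
      (Gamma (2 * m + 2 * ν + 1) * s ^ (-(2 * (m : ℝ) + 2 * ν + 1)))
      = 2 ^ ν / √π * s ^ (-(2 * ν + 1)) * (Gamma (m + (ν + 1 / 2)) / m.factorial * ((s ^ 2)⁻¹) ^ m) := by
    have h := Real.Gamma_mul_Gamma_add_half (m + (ν + 1 / 2))
    have h4 : 0 < Gamma ((m : ℝ) + ν + 1) := Gamma_pos_of_pos (by positivity)
    rw [show (m : ℝ) + (ν + 1 / 2) + 1 / 2 = m + ν + 1 by ring,
      show 2 * ((m : ℝ) + (ν + 1 / 2)) = 2 * m + 2 * ν + 1 by ring,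
      show 1 - (2 * (m : ℝ) + 2 * ν + 1) = -(2 * m + (ν + ν)) by ring, rpow_neg (by norm_num),
      rpow_add (by norm_num), rpow_mul (by norm_num), rpow_natCast, rpow_add (by norm_num)] at h
    rw [show -(2 * (m : ℝ) + 2 * ν + 1) = -(2 * ν + 1) + -(2 * m) by ring, rpow_add hs0,
      rpow_neg hs0.le (2 * (m : ℝ)), rpow_mul hs0.le, rpow_natCast, rpow_two, inv_pow, div_pow,
      one_pow, rpow_neg (by norm_num)]
    rw [show (2 : ℝ) ^ (2 : ℝ) = 4 by norm_num] at h
    have hm : (m.factorial : ℝ) ≠ 0 := by positivity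
    have hp : √π ≠ 0 := by positivity
    have h2 : (2 : ℝ) ^ ν ≠ 0 := by positivity
    field_simp at h ⊢
    linear_combination (-1 : ℝ) * h
  have hFint (m : ℕ) : ∫ t in Ioi (0 : ℝ), F m t = 2 ^ ν / √π * s ^ (-(2 * ν + 1)) *
      (Gamma (m + (ν + 1 / 2)) / m.factorial * (-(s ^ 2)⁻¹) ^ m) := by
    rw [hF]
    simp only
    rw [integral_const_mul, integral_rpow_exp (hb m) hs0, coef, neg_pow (s ^ 2)⁻¹]
    linear_combination (-1) ^ m * hdup m
  have hFnorm (m : ℕ) : ∫ t in Ioi (0 : ℝ), ‖F m t‖ = 2 ^ ν / √π * s ^ (-(2 * ν + 1)) *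
      (Gamma (m + (ν + 1 / 2)) / m.factorial * ((s ^ 2)⁻¹) ^ m) := by
    rw [← hdup m, ← integral_rpow_exp (hb m) hs0, ← integral_const_mul]
    refine setIntegral_congr_fun measurableSet_Ioi fun t (ht : 0 < t) ↦ ?_
    have h4 : 0 < Gamma ((m : ℝ) + ν + 1) := Gamma_pos_of_pos (by positivity)
    simp only [hF, coef, norm_mul, norm_div, norm_pow, norm_neg, norm_one, one_pow]
    rw [Real.norm_of_nonneg (by positivity), Real.norm_of_nonneg (by positivity),
      Real.norm_of_nonneg (by positivity), Real.norm_of_nonneg (by positivity),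
      Real.norm_of_nonneg (by positivity), Real.norm_of_nonneg (by positivity)]
  have hx : |(s ^ 2)⁻¹| < 1 := by
    rw [abs_of_pos (by positivity)]
    exact inv_lt_one_of_one_lt₀ (by nlinarith)
  have ha : 0 < ν + 1 / 2 := by linarith
  have hsum := hasSum_integral_of_summable_integral_norm hint
    (by simp_rw [hFnorm]; exact ((hasSum_binomial ha hx).summable.mul_left _))
  simp_rw [hFint] at hsum
  have hsum2 := (hasSum_binomial (x := -(s ^ 2)⁻¹) ha (by rwa [abs_neg])).mul_left
    (2 ^ ν / √π * s ^ (-(2 * ν + 1)))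
  have := hsum.unique hsum2
  rw [setIntegral_congr_fun (g := fun t ↦ ∑' m, F m t) measurableSet_Ioi, this]
  · have e : s ^ (-(2 * ν + 1)) = (s ^ 2) ^ (-(ν + 1 / 2)) := by
      rw [← rpow_two, ← rpow_mul hs0.le]; congr 1; ring
    have e2 : 1 + s ^ 2 = s ^ 2 * (1 - -(s ^ 2)⁻¹) := by field_simp; ring
    rw [e, e2, mul_rpow (by positivity) (by rw [sub_neg_eq_add]; positivity)]
    ring
  · intro t (ht : 0 < t)
    have h1 : t ^ (ν - 1 / 2) * t ^ (ν + 1 / 2) = t ^ (2 * ν) := by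
      rw [← rpow_add ht]; congr 1; ring
    have h2 : exp (-(s * t)) * (t ^ (ν - 1 / 2) * u ν t)
        = (2 ^ (-ν) * exp (-(s * t)) * t ^ (2 * ν)) * entire ν (t ^ 2 / 4) := by
      rw [← h1, u]; ring
    simp only
    rw [h2, entire, ← tsum_mul_left]
    refine tsum_congr fun m ↦ ?_
    simp only [hF]
    rw [rpow_add ht, rpow_mul ht.le 2 (m : ℝ), rpow_natCast, rpow_two, div_pow, div_pow, one_pow]
    ring

lemma u_bounded (ν : ℝ) (hν : 0 ≤ ν) : ∃ K, ∀ x > 0, |u ν x| ≤ K := by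
  obtain ⟨K, hK⟩ := bounded_of_ode (hasDerivAt_u ν hν) (hasDerivAt_v ν hν) one_pos
  have hc : ContinuousOn (u ν) (Icc 0 1) := by
    have h1 : Continuous fun x : ℝ ↦ entire ν (x ^ 2 / 4) :=
      continuous_iff_continuousAt.2 fun x ↦ (hasDerivAt_entire_sq ν hν x).continuousAt
    have h2 : Continuous fun x : ℝ ↦ x ^ (ν + 1 / 2) :=
      Real.continuous_rpow_const (by linarith)
    exact ((continuous_const.mul h2).mul h1).continuousOn
  obtain ⟨K', hK'⟩ := isCompact_Icc.exists_bound_of_continuousOn hc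
  refine ⟨max K K', fun x hx ↦ ?_⟩
  rcases le_total x 1 with h | h
  · exact (hK' x ⟨hx.le, h⟩).trans (le_max_right _ _)
  · exact (hK x h).trans (le_max_left _ _)

/-- The Laplace transform `∫₀^∞ e^{-st} f t dt`. It is a Bochner integral, hence `0` when the
integrand is not integrable. -/
noncomputable def laplace (f : ℝ → ℂ) (s : ℂ) : ℂ :=
  ∫ t in Ioi (0 : ℝ), Complex.exp (-(s * t)) * f t

lemma norm_exp_neg_mul (s : ℂ) (t : ℝ) : ‖Complex.exp (-(s * t))‖ = exp (-(s.re * t)) := by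
  rw [Complex.norm_exp]; simp

lemma integrableOn_laplace {f : ℝ → ℂ} (hf : ContinuousOn f (Ioi 0)) {K b : ℝ} (hb : -1 < b)
    (hK : ∀ t > 0, ‖f t‖ ≤ K * t ^ b) {s : ℂ} (hs : 0 < s.re) :
    IntegrableOn (fun t : ℝ ↦ Complex.exp (-(s * t)) * f t) (Ioi 0) := by
  refine Integrable.mono' ((integrableOn_rpow_exp hb hs).const_mul K)
    ((ContinuousOn.mul (by fun_prop) hf).aestronglyMeasurable measurableSet_Ioi)
    ((ae_restrict_iff' measurableSet_Ioi).2 (ae_of_all _ fun t ht ↦ ?_))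
  rw [norm_mul, norm_exp_neg_mul, mul_comm, ← mul_assoc]
  gcongr
  exact hK t ht

/-- The Laplace transform of a function that is `O(t^b)` with `b > -1` is holomorphic on `Re s > 0`. -/
lemma differentiableAt_laplace {f : ℝ → ℂ} (hf : ContinuousOn f (Ioi 0)) {K b : ℝ} (hb : -1 < b)
    (hK : ∀ t > 0, ‖f t‖ ≤ K * t ^ b) {s : ℂ} (hs : 0 < s.re) :
    DifferentiableAt ℂ (laplace f) s := by
  have hopen : IsOpen {z : ℂ | s.re / 2 < z.re} := isOpen_lt continuous_const Complex.continuous_re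
  have hmem : {z : ℂ | s.re / 2 < z.re} ∈ 𝓝 s := hopen.mem_nhds (by simp; linarith)
  refine (hasDerivAt_integral_of_dominated_loc_of_deriv_le
    (F := fun (z : ℂ) (t : ℝ) ↦ Complex.exp (-(z * t)) * f t)
    (F' := fun (z : ℂ) (t : ℝ) ↦ Complex.exp (-(z * t)) * (-t) * f t)
    (bound := fun t : ℝ ↦ K * (t ^ (b + 1) * exp (-(s.re / 2 * t))))
    (μ := volume.restrict (Ioi 0)) hmem ?_ (integrableOn_laplace hf hb hK hs) ?_ ?_
    ((integrableOn_rpow_exp (by linarith) (by linarith)).const_mul K) ?_).2.differentiableAt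
  · exact Eventually.of_forall fun z ↦
      (ContinuousOn.mul (by fun_prop) hf).aestronglyMeasurable measurableSet_Ioi
  · exact (ContinuousOn.mul (by fun_prop) hf).aestronglyMeasurable measurableSet_Ioi
  · refine (ae_restrict_iff' measurableSet_Ioi).2 (ae_of_all _ fun t (ht : 0 < t) z hz ↦ ?_)
    rw [norm_mul, norm_mul, norm_exp_neg_mul, norm_neg, Complex.norm_real,
      Real.norm_of_nonneg ht.le, rpow_add_one ht.ne']
    calc _ ≤ exp (-(s.re / 2 * t)) * t * (K * t ^ b) := by
          have hz' : s.re / 2 ≤ z.re := le_of_lt hz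
          gcongr
          exact hK t ht
      _ = _ := by ring
  · refine ae_of_all _ fun t z _ ↦ ?_
    have h1 : HasDerivAt (fun z : ℂ ↦ -(z * t)) (-(1 * t)) z :=
      ((hasDerivAt_id z).mul_const (t : ℂ)).neg
    refine (h1.cexp.mul_const (f t)).congr_deriv ?_
    ring

lemma laplace_ofReal (f : ℝ → ℝ) (x : ℝ) :
    laplace (fun t ↦ (f t : ℂ)) x = ((∫ t in Ioi (0 : ℝ), exp (-(x * t)) * f t : ℝ) : ℂ) := by
  rw [laplace, ← integral_complex_ofReal]
  refine integral_congr_ae (ae_of_all _ fun t ↦ ?_)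
  simp

/-- The identity theorem on the half-plane `Re s > 0`, for functions that agree on the ray `(1, ∞)`. -/
lemma eq_of_eq_on_reals {f g : ℂ → ℂ} (hf : ∀ z : ℂ, 0 < z.re → DifferentiableAt ℂ f z)
    (hg : ∀ z : ℂ, 0 < z.re → DifferentiableAt ℂ g z)
    (hfg : ∀ x : ℝ, 1 < x → f x = g x) {s : ℂ} (hs : 0 < s.re) : f s = g s := by
  set U : Set ℂ := {z | 0 < z.re}
  have hU : IsOpen U := isOpen_lt continuous_const Complex.continuous_re
  have hUc : IsPreconnected U := (convex_halfSpace_re_gt 0).isPreconnected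
  have hf' : AnalyticOnNhd ℂ f U :=
    DifferentiableOn.analyticOnNhd (fun z hz ↦ (hf z hz).differentiableWithinAt) hU
  have hg' : AnalyticOnNhd ℂ g U :=
    DifferentiableOn.analyticOnNhd (fun z hz ↦ (hg z hz).differentiableWithinAt) hU
  refine hf'.eqOn_of_preconnected_of_frequently_eq hg' hUc (z₀ := 2) (by simp [U]) ?_ hs
  have hpos (n : ℕ) : (0 : ℝ) < 1 / ((n : ℝ) + 1) := by positivity
  have ht : Tendsto (fun n : ℕ ↦ ((2 + 1 / ((n : ℝ) + 1) : ℝ) : ℂ)) atTop (𝓝[≠] 2) := by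
    refine tendsto_nhdsWithin_iff.2 ⟨?_, Eventually.of_forall fun n h ↦ ?_⟩
    · have := (tendsto_one_div_add_atTop_nhds_zero_nat (𝕜 := ℝ)).const_add 2
      rw [add_zero] at this
      exact_mod_cast (Complex.continuous_ofReal.tendsto (2 : ℝ)).comp this
    · have h1 : ((2 + 1 / ((n : ℝ) + 1) : ℝ) : ℂ) = ((2 : ℝ) : ℂ) := by
        rw [mem_singleton_iff.1 h]; norm_num
      have h2 := Complex.ofReal_injective h1
      linarith [hpos n]
  refine ht.frequently (Frequently.of_forall fun n ↦ hfg _ ?_)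
  linarith [hpos n]

lemma continuousOn_rpow_ofReal (b : ℝ) :
    ContinuousOn (fun t : ℝ ↦ ((t ^ b : ℝ) : ℂ)) (Ioi 0) :=
  Complex.continuous_ofReal.comp_continuousOn
    fun t ht ↦ (continuousAt_rpow_const t _ (Or.inl (ne_of_gt ht))).continuousWithinAt

lemma norm_rpow_ofReal_le (b : ℝ) : ∀ t > 0, ‖((t ^ b : ℝ) : ℂ)‖ ≤ 1 * t ^ b := by
  intro t ht
  rw [Complex.norm_real, Real.norm_of_nonneg (by positivity), one_mul]

lemma laplace_rpow {p : ℝ} (hp : 0 < p) {s : ℂ} (hs : 0 < s.re) :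
    laplace (fun t ↦ ((t ^ (p - 1) : ℝ) : ℂ)) s = (Gamma p : ℂ) * s ^ ((-p : ℝ) : ℂ) := by
  refine eq_of_eq_on_reals (g := fun s : ℂ ↦ (Gamma p : ℂ) * s ^ ((-p : ℝ) : ℂ))
    (fun z hz ↦ differentiableAt_laplace (continuousOn_rpow_ofReal (p - 1)) (by linarith)
      (norm_rpow_ofReal_le (p - 1)) hz)
    (fun z hz ↦ (differentiableAt_id.cpow_const (Or.inl hz)).const_mul _) (fun x hx ↦ ?_) hs
  have h := integral_rpow_exp (b := p - 1) (by linarith) (one_pos.trans hx)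
  simp_rw [mul_comm (_ ^ (p - 1))] at h
  rw [laplace_ofReal, h, sub_add_cancel, Complex.ofReal_mul, Complex.ofReal_cpow (by linarith)]

/-- The Laplace transform of `t^ν J_ν(t) = t^{ν - 1/2} u t` on `Re s > 0`. The principal branch of the
power is the right one, as `1 + s²` avoids the non-positive reals on the half-plane. -/
lemma laplace_u (ν : ℝ) (hν : 0 ≤ ν) {s : ℂ} (hs : 0 < s.re) :
    laplace (fun t ↦ ((t ^ (ν - 1 / 2) * u ν t : ℝ) : ℂ)) s
      = ((2 ^ ν / √π * Gamma (ν + 1 / 2) : ℝ) : ℂ) * (1 + s ^ 2) ^ ((-(ν + 1 / 2) : ℝ) : ℂ) := by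
  obtain ⟨K, hK⟩ := u_bounded ν hν
  have hcont : ContinuousOn (fun t : ℝ ↦ ((t ^ (ν - 1 / 2) * u ν t : ℝ) : ℂ)) (Ioi 0) := by
    refine Complex.continuous_ofReal.comp_continuousOn (ContinuousOn.mul ?_ ?_)
    · exact fun t ht ↦ (continuousAt_rpow_const t _ (Or.inl (ne_of_gt ht))).continuousWithinAt
    · exact fun x hx ↦ (hasDerivAt_u ν hν x hx).continuousAt.continuousWithinAt
  have hbd : ∀ t > 0, ‖((t ^ (ν - 1 / 2) * u ν t : ℝ) : ℂ)‖ ≤ K * t ^ (ν - 1 / 2) := by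
    intro t ht
    rw [Complex.norm_real, norm_mul, Real.norm_of_nonneg (by positivity), mul_comm]
    gcongr
    exact hK t ht
  have hslit : ∀ z : ℂ, 0 < z.re → 1 + z ^ 2 ∈ Complex.slitPlane := by
    intro z hz
    rw [Complex.mem_slitPlane_iff]
    by_cases h : z.im = 0
    · left
      simp [sq, h]
      positivity
    · right
      simp [sq]
      intro h0
      have : z.re * z.im = 0 := by linarith
      exact (mul_ne_zero hz.ne' h) this
  refine eq_of_eq_on_reals (g := fun s : ℂ ↦ ((2 ^ ν / √π * Gamma (ν + 1 / 2) : ℝ) : ℂ) *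
      (1 + s ^ 2) ^ ((-(ν + 1 / 2) : ℝ) : ℂ))
    (fun z hz ↦ differentiableAt_laplace hcont (by linarith) hbd hz) (fun z hz ↦ ?_)
    (fun x hx ↦ ?_) hs
  · have h1 : DifferentiableAt ℂ (fun s : ℂ ↦ 1 + s ^ 2) z := by fun_prop
    exact (h1.cpow_const (hslit z hz)).const_mul _
  · rw [laplace_ofReal, laplace_real ν hν hx,
      Complex.ofReal_mul _ ((1 + x ^ 2) ^ (-(ν + 1 / 2))), Complex.ofReal_cpow (by positivity)]
    congr 2
    push_cast
    rfl

/-! ### The amplitude at infinity -/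

/-- The free wave `Im (e^{it} W)`, as a complex number. It recovers `u t` from `W = phase u v t`. -/
noncomputable def wave (W : ℂ) (t : ℝ) : ℂ :=
  (Complex.exp (t * Complex.I) * W - Complex.exp (-(t * Complex.I)) * (starRingEnd ℂ) W)
    / (2 * Complex.I)

lemma norm_exp_mul_I' (t : ℝ) : ‖Complex.exp (-(t * Complex.I))‖ = 1 := by
  rw [show -((t : ℂ) * Complex.I) = ((-t : ℝ) : ℂ) * Complex.I by push_cast; ring,
    Complex.norm_exp_ofReal_mul_I]

lemma norm_wave_le (W : ℂ) (t : ℝ) : ‖wave W t‖ ≤ ‖W‖ := by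
  have h := norm_sub_le (Complex.exp (t * Complex.I) * W)
    (Complex.exp (-(t * Complex.I)) * (starRingEnd ℂ) W)
  rw [norm_mul, norm_mul, Complex.norm_exp_ofReal_mul_I, norm_exp_mul_I', Complex.norm_conj] at h
  rw [wave, norm_div, norm_mul, Complex.norm_I]
  norm_num
  linarith

lemma wave_phase (u v : ℝ → ℝ) (t : ℝ) : wave (phase u v t) t = u t := by
  have h1 : (starRingEnd ℂ) (phase u v t)
      = Complex.exp (t * Complex.I) * (v t - u t * Complex.I) := by
    rw [phase, map_mul, ← Complex.exp_conj]
    simp [sub_eq_add_neg]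
  have h2 : Complex.exp (t * Complex.I) * Complex.exp (-(t * Complex.I)) = 1 := by
    rw [← Complex.exp_add]; simp
  rw [wave, h1, phase, div_eq_iff (by simp)]
  linear_combination (2 * u t * Complex.I) * h2

lemma wave_sub (W W' : ℂ) (t : ℝ) : wave (W - W') t = wave W t - wave W' t := by
  simp only [wave, map_sub]; ring

/-- If `phase` converges to `W` with error `O(1/t)`, then `u` is close to the free wave of `W`. The
exponent `-1/4` is any choice in `(-1/2, 0)`: it is weaker than the decay `1/t` at infinity, and
`t^{ν - 1/2} t^{-1/4}` is still integrable at `0` for every `ν ≥ 0`. -/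
lemma norm_u_sub_wave_le (ν : ℝ) (hν : 0 ≤ ν) {W : ℂ} {K : ℝ}
    (hK : ∀ x ≥ 1, ‖phase (u ν) (v ν) x - W‖ ≤ K / x) :
    ∃ M, ∀ t > 0, ‖(u ν t : ℂ) - wave W t‖ ≤ M * t ^ (-(1 / 4) : ℝ) := by
  obtain ⟨B, hB⟩ := u_bounded ν hν
  refine ⟨max (B + ‖W‖) K, fun t ht ↦ ?_⟩
  have hB0 : 0 ≤ B + ‖W‖ := by
    have := (abs_nonneg _).trans (hB 1 one_pos)
    positivity
  rcases le_total t 1 with h | h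
  · have h1 : (1 : ℝ) ≤ t ^ (-(1 / 4) : ℝ) :=
      one_le_rpow_of_pos_of_le_one_of_nonpos ht h (by norm_num)
    calc _ ≤ ‖(u ν t : ℂ)‖ + ‖wave W t‖ := norm_sub_le _ _
      _ ≤ B + ‖W‖ := by
        gcongr
        · rw [Complex.norm_real]; exact hB t ht
        · exact norm_wave_le W t
      _ = (B + ‖W‖) * 1 := (mul_one _).symm
      _ ≤ _ := by gcongr; exact le_max_left _ _
  · have h1 : t ^ (-1 : ℝ) ≤ t ^ (-(1 / 4) : ℝ) := rpow_le_rpow_of_exponent_le h (by norm_num)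
    rw [rpow_neg_one] at h1
    have h2 := (norm_wave_le (phase (u ν) (v ν) t - W) t).trans (hK t h)
    rw [wave_sub, wave_phase, div_eq_mul_inv] at h2
    calc _ ≤ K * t⁻¹ := h2
      _ ≤ max (B + ‖W‖) K * t⁻¹ := by gcongr; exact le_max_right _ _
      _ ≤ _ := by gcongr

/-- Near the singularity `s = i` of the Laplace transform of `t^{ν - 1/2} u t`, only the `e^{it}` part
of the free wave of `W` contributes at the order `ε^{-(ν + 1/2)}`. -/
lemma laplace_near_singularity (ν : ℝ) (hν : 0 ≤ ν) {W : ℂ} {M : ℝ}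
    (hM : ∀ t > 0, ‖(u ν t : ℂ) - wave W t‖ ≤ M * t ^ (-(1 / 4) : ℝ)) {ε : ℝ} (hε : 0 < ε) :
    |‖laplace (fun t ↦ ((t ^ (ν - 1 / 2) * u ν t : ℝ) : ℂ)) (ε + Complex.I)‖
        - ‖W‖ / 2 * Gamma (ν + 1 / 2) * ε ^ (-(ν + 1 / 2))|
      ≤ ‖W‖ / 2 * Gamma (ν + 1 / 2)
        + M * Gamma (ν + 1 / 4) * ε ^ (-(ν + 1 / 4)) := by
  set p := ν + 1 / 2 with hp
  have hp0 : 0 < p := by positivity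
  have hpp : ν - 1 / 2 = p - 1 := by rw [hp]; ring
  have hG : 0 < Gamma p := Gamma_pos_of_pos hp0
  -- `A`, `B`, `R` come from the terms `e^{it} W`, `e^{-it} conj W` of the wave and from `u - wave W`.
  set A : ℂ := laplace (fun t ↦ ((t ^ (p - 1) : ℝ) : ℂ)) ε with hA
  set B : ℂ := laplace (fun t ↦ ((t ^ (p - 1) : ℝ) : ℂ)) (ε + 2 * Complex.I) with hB
  set R : ℂ := ∫ t in Ioi (0 : ℝ), Complex.exp (-((ε + Complex.I) * t)) *
    (((t ^ (p - 1) : ℝ) : ℂ) * ((u ν t : ℂ) - wave W t)) with hR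
  have hcont : ContinuousOn (fun t : ℝ ↦ ((u ν t : ℂ) - wave W t)) (Ioi 0) := by
    refine ContinuousOn.sub (Complex.continuous_ofReal.comp_continuousOn
      fun x hx ↦ (hasDerivAt_u ν hν x hx).continuousAt.continuousWithinAt) ?_
    unfold wave
    fun_prop
  have hbd : ∀ t > 0, ‖((t ^ (p - 1) : ℝ) : ℂ) * ((u ν t : ℂ) - wave W t)‖
      ≤ M * t ^ (ν - 3 / 4) := by
    intro t ht
    rw [norm_mul, Complex.norm_real, Real.norm_of_nonneg (by positivity),
      show ν - 3 / 4 = (p - 1) + -(1 / 4) by rw [hp]; ring, rpow_add ht]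
    calc _ ≤ t ^ (p - 1) * (M * t ^ (-(1 / 4) : ℝ)) := by gcongr; exact hM t ht
      _ = _ := by ring
  have hre1 : 0 < ((ε : ℂ)).re := by simpa using hε
  have hre2 : 0 < ((ε : ℂ) + 2 * Complex.I).re := by simpa using hε
  have hre3 : 0 < ((ε : ℂ) + Complex.I).re := by simpa using hε
  have hpow := norm_rpow_ofReal_le (p - 1)
  have iA := integrableOn_laplace (continuousOn_rpow_ofReal (p - 1)) (by linarith) hpow hre1
  have iB := integrableOn_laplace (continuousOn_rpow_ofReal (p - 1)) (by linarith) hpow hre2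
  have iR : IntegrableOn (fun t : ℝ ↦ Complex.exp (-((ε + Complex.I) * t)) *
      (((t ^ (p - 1) : ℝ) : ℂ) * ((u ν t : ℂ) - wave W t))) (Ioi 0) :=
    integrableOn_laplace ((continuousOn_rpow_ofReal (p - 1)).mul hcont) (by linarith)
    hbd hre3
  have hsplit : laplace (fun t ↦ ((t ^ (ν - 1 / 2) * u ν t : ℝ) : ℂ)) (ε + Complex.I)
      = W / (2 * Complex.I) * A - (starRingEnd ℂ) W / (2 * Complex.I) * B + R := by
    have iAB : Integrable (fun t : ℝ ↦
        W / (2 * Complex.I) * (Complex.exp (-((ε : ℂ) * t)) * ((t ^ (p - 1) : ℝ) : ℂ))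
        - (starRingEnd ℂ) W / (2 * Complex.I) *
          (Complex.exp (-((ε + 2 * Complex.I) * t)) * ((t ^ (p - 1) : ℝ) : ℂ)))
        (volume.restrict (Ioi 0)) := (iA.const_mul _).sub (iB.const_mul _)
    rw [hA, hB, hR, laplace, laplace, laplace, ← integral_const_mul, ← integral_const_mul,
      ← integral_sub (iA.const_mul _) (iB.const_mul _),
      ← integral_add iAB iR, hpp]
    refine integral_congr_ae (ae_of_all _ fun t ↦ ?_)
    have e1 : Complex.exp (-((ε : ℂ) * t))
        = Complex.exp (-((ε + Complex.I) * t)) * Complex.exp (t * Complex.I) := by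
      rw [← Complex.exp_add]; congr 1; ring
    have e2 : Complex.exp (-(((ε : ℂ) + 2 * Complex.I) * t))
        = Complex.exp (-((ε + Complex.I) * t)) * Complex.exp (-(t * Complex.I)) := by
      rw [← Complex.exp_add]; congr 1; ring
    beta_reduce
    rw [e1, e2, wave]
    push_cast
    ring
  have nA : A = ((Gamma p * ε ^ (-p) : ℝ) : ℂ) := by
    rw [hA, laplace_rpow hp0 hre1, Complex.ofReal_mul, Complex.ofReal_cpow hε.le]
  have nB : ‖B‖ ≤ Gamma p := by
    rw [hB, laplace_rpow hp0 hre2, norm_mul, Complex.norm_cpow_real,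
      Complex.norm_real, Real.norm_of_nonneg hG.le]
    refine mul_le_of_le_one_right hG.le (rpow_le_one_of_one_le_of_nonpos ?_ (by linarith))
    have := Complex.abs_im_le_norm ((ε : ℂ) + 2 * Complex.I)
    simp at this
    linarith
  have nR : ‖R‖ ≤ M * Gamma (ν + 1 / 4) * ε ^ (-(ν + 1 / 4)) := by
    have h := norm_integral_le_of_norm_le (f := fun t : ℝ ↦ Complex.exp (-((ε + Complex.I) * t)) *
        (((t ^ (p - 1) : ℝ) : ℂ) * ((u ν t : ℂ) - wave W t)))
      ((integrableOn_rpow_exp (b := ν - 3 / 4) (by linarith) hε).const_mul M)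
      ((ae_restrict_iff' measurableSet_Ioi).2 (ae_of_all _ fun t (ht : 0 < t) ↦ ?_))
    · rw [integral_const_mul, integral_rpow_exp (by linarith) hε,
        show ν - 3 / 4 + 1 = ν + 1 / 4 by ring] at h
      rw [mul_assoc]
      exact h
    · rw [norm_mul, norm_exp_neg_mul, mul_comm, ← mul_assoc]
      have : ((ε : ℂ) + Complex.I).re = ε := by simp
      rw [this]
      gcongr
      exact hbd t ht
  have n1 : ‖W / (2 * Complex.I) * A‖ = ‖W‖ / 2 * Gamma p * ε ^ (-p) := by
    rw [nA, norm_mul, norm_div, norm_mul, Complex.norm_I, Complex.norm_real,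
      Real.norm_of_nonneg (by positivity)]
    norm_num
    ring
  have n2 : ‖(starRingEnd ℂ) W / (2 * Complex.I) * B‖ ≤ ‖W‖ / 2 * Gamma p := by
    rw [norm_mul, norm_div, norm_mul, Complex.norm_I, Complex.norm_conj]
    norm_num
    gcongr
  rw [← n1, hsplit]
  refine (abs_norm_sub_norm_le _ _).trans ?_
  rw [show W / (2 * Complex.I) * A - (starRingEnd ℂ) W / (2 * Complex.I) * B + R
    - W / (2 * Complex.I) * A = R - (starRingEnd ℂ) W / (2 * Complex.I) * B by ring]
  refine (norm_sub_le _ _).trans ?_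
  linarith

/-- The amplitude of `√x J_ν(x)` at infinity is `√(2/π)`: multiply `laplace_near_singularity` by
`ε^{ν + 1/2}`, insert the closed form `laplace_u`, and let `ε → 0⁺`. -/
lemma norm_amplitude (ν : ℝ) (hν : 0 ≤ ν) {W : ℂ} {K : ℝ}
    (hK : ∀ x ≥ 1, ‖phase (u ν) (v ν) x - W‖ ≤ K / x) : ‖W‖ = √(2 / π) := by
  obtain ⟨M, hM⟩ := norm_u_sub_wave_le ν hν hK
  set p := ν + 1 / 2 with hp
  have hp0 : 0 < p := by positivity
  have hG : 0 < Gamma p := Gamma_pos_of_pos hp0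
  set C : ℝ := 2 ^ ν / √π * Gamma p with hC
  have hC0 : 0 < C := by positivity
  have hL : ∀ ε : ℝ, 0 < ε →
      ‖laplace (fun t ↦ ((t ^ (ν - 1 / 2) * u ν t : ℝ) : ℂ)) (ε + Complex.I)‖
        = ε ^ (-p) * (C * ‖(ε : ℂ) + 2 * Complex.I‖ ^ (-p)) := by
    intro ε hε
    rw [laplace_u ν hν (by simpa using hε), norm_mul, Complex.norm_cpow_real, Complex.norm_real,
      Real.norm_of_nonneg hC0.le]
    have : 1 + ((ε : ℂ) + Complex.I) ^ 2 = ε * (ε + 2 * Complex.I) := by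
      linear_combination Complex.I_sq
    rw [this, norm_mul, Complex.norm_real, Real.norm_of_nonneg hε.le,
      mul_rpow hε.le (norm_nonneg _)]
    ring
  have hest : ∀ ε : ℝ, 0 < ε → |C * ‖(ε : ℂ) + 2 * Complex.I‖ ^ (-p) - ‖W‖ / 2 * Gamma p|
      ≤ ‖W‖ / 2 * Gamma p * ε ^ p + M * Gamma (ν + 1 / 4) * ε ^ (1 / 4 : ℝ) := by
    intro ε hε
    have h := laplace_near_singularity ν hν hM hε
    rw [hL ε hε, ← hp, mul_comm (‖W‖ / 2 * Gamma p) (ε ^ (-p)), ← mul_sub, abs_mul,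
      abs_of_pos (by positivity)] at h
    have h2 := mul_le_mul_of_nonneg_left h (by positivity : 0 ≤ ε ^ p)
    rw [← mul_assoc, ← rpow_add hε, add_neg_cancel, rpow_zero, one_mul] at h2
    have h3 : ε ^ p * ε ^ (-(ν + 1 / 4)) = ε ^ (1 / 4 : ℝ) := by
      rw [← rpow_add hε]; congr 1; rw [hp]; ring
    refine h2.trans (le_of_eq ?_)
    rw [← h3]; ring
  have t1 : Tendsto (fun ε : ℝ ↦ C * ‖(ε : ℂ) + 2 * Complex.I‖ ^ (-p)) (𝓝[>] 0)
      (𝓝 (C * 2 ^ (-p))) := by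
    have hc : ContinuousAt (fun ε : ℝ ↦ C * ‖(ε : ℂ) + 2 * Complex.I‖ ^ (-p)) 0 := by
      refine ContinuousAt.mul continuousAt_const (ContinuousAt.rpow_const (by fun_prop) ?_)
      left; simp
    have := hc.tendsto
    simp only [Complex.ofReal_zero, zero_add, norm_mul, Complex.norm_I, Complex.norm_ofNat,
      mul_one] at this
    exact this.mono_left nhdsWithin_le_nhds
  have t2 : Tendsto (fun ε : ℝ ↦ C * ‖(ε : ℂ) + 2 * Complex.I‖ ^ (-p)) (𝓝[>] 0)
      (𝓝 (‖W‖ / 2 * Gamma p)) := by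
    rw [tendsto_iff_dist_tendsto_zero]
    have hz : Tendsto (fun ε : ℝ ↦ ‖W‖ / 2 * Gamma p * ε ^ p
        + M * Gamma (ν + 1 / 4) * ε ^ (1 / 4 : ℝ)) (𝓝[>] 0) (𝓝 0) := by
      have hc : ContinuousAt (fun ε : ℝ ↦ ‖W‖ / 2 * Gamma p * ε ^ p
          + M * Gamma (ν + 1 / 4) * ε ^ (1 / 4 : ℝ)) 0 := by
        refine ContinuousAt.add (ContinuousAt.mul continuousAt_const
          (continuousAt_rpow_const _ _ (Or.inr hp0.le)))
          (ContinuousAt.mul continuousAt_const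
          (continuousAt_rpow_const _ _ (Or.inr (by norm_num))))
      have := hc.tendsto
      rw [zero_rpow hp0.ne', zero_rpow (by norm_num), mul_zero, mul_zero, add_zero] at this
      exact this.mono_left nhdsWithin_le_nhds
    refine squeeze_zero' (Eventually.of_forall fun _ ↦ dist_nonneg) ?_ hz
    filter_upwards [self_mem_nhdsWithin] with ε hε
    exact hest ε hε
  have h := tendsto_nhds_unique t1 t2
  have hW : ‖W‖ = 2 * 2 ^ ν * 2 ^ (-p) / √π := by
    rw [hC] at h
    field_simp at h ⊢
    linarith
  have h2 : (2 : ℝ) * 2 ^ ν * 2 ^ (-p) = √2 := by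
    rw [sqrt_eq_rpow, mul_assoc, ← rpow_add two_pos, ← rpow_one_add' (by norm_num)]
    · congr 1; rw [hp]; ring
    · rw [hp]; ring_nf; norm_num
  rw [hW, h2, sqrt_div (by norm_num)]

/-- At a positive zero of `J_ν` the modulus of `phase` is `√x |J_ν'(x)|`. -/
lemma norm_phase_of_zero (ν : ℝ) (hν : 0 ≤ ν) {x : ℝ} (hx : 0 < x) (h0 : besselJ ν x = 0) :
    ‖phase (u ν) (v ν) x‖ = √x * |deriv (besselJ ν) x| := by
  have hu : u ν x = 0 := by
    rw [besselJ_eq ν x hx] at h0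
    exact (mul_eq_zero.1 h0).resolve_right (by positivity)
  have hev : besselJ ν =ᶠ[𝓝 x] fun y ↦ u ν y * y ^ (-(1 / 2 : ℝ)) := by
    filter_upwards [lt_mem_nhds hx] with y hy
    exact besselJ_eq ν y hy
  have hd := (hasDerivAt_u ν hν x hx).mul
    (hasDerivAt_rpow_const (x := x) (p := -(1 / 2 : ℝ)) (Or.inl hx.ne'))
  rw [hu, zero_mul, add_zero] at hd
  have hd2 : deriv (besselJ ν) x = v ν x * x ^ (-(1 / 2 : ℝ)) :=
    (hd.congr_of_eventuallyEq hev).deriv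
  have hs : √x ≠ 0 := by positivity
  rw [hd2, abs_mul, abs_of_pos (a := x ^ (-(1 / 2 : ℝ))) (by positivity), rpow_neg hx.le,
    ← sqrt_eq_rpow, phase, norm_mul, norm_exp_mul_I', hu, Complex.ofReal_zero, zero_mul, add_zero,
    one_mul, Complex.norm_real, Real.norm_eq_abs]
  field_simp

end BesselAux

/-- `√(j_{ν,k}) |J_ν'(j_{ν,k})| = √(2/π) + O(1/j_{ν,k})`, where `(j k)_{k ∈ ℕ}` is the
strictly increasing enumeration of the positive zeros of `J_ν`. -/
theorem stmt_9 (ν : ℝ) (hν : 0 ≤ ν) (j : ℕ → ℝ)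
    (hpos : ∀ k, 0 < j k) (hzero : ∀ k, besselJ ν (j k) = 0)
    (hmono : StrictMono j)
    (hall : ∀ x, 0 < x → besselJ ν x = 0 → ∃ k, j k = x) :
    ∃ C > 0, ∀ k : ℕ,
      |Real.sqrt (j k) * |deriv (besselJ ν) (j k)| - Real.sqrt (2 / Real.pi)| ≤ C / j k := by
  obtain ⟨W, hW⟩ :=
    BesselAux.phase_limit (BesselAux.hasDerivAt_u ν hν) (BesselAux.hasDerivAt_v ν hν)
  obtain ⟨K₁, -, hK₁⟩ := hW 1 one_pos
  have hn := BesselAux.norm_amplitude ν hν hK₁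
  obtain ⟨K, hK0, hK⟩ := hW (j 0) (hpos 0)
  refine ⟨K, hK0, fun k ↦ ?_⟩
  rw [← BesselAux.norm_phase_of_zero ν hν (hpos k) (hzero k), ← hn]
  exact (abs_norm_sub_norm_le _ _).trans (hK _ (hmono.monotone (Nat.zero_le k)))
end
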